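/- arXiv:2602.15621 — 6 statements merged into one kernel-verified Lean document; each statement's English description precedes it below -/
import Mathlib

section
/- For every multi-index α ∈ ℕ^n, every x ∈ ℝ^n and every t > 0, the parabolic polynomial v_α satisfies the integral representation v_α(x,t) = ∫_{ℝ^n} G(x−y, t) y^α dy, where y^α = y_1^{α_1}⋯y_n^{α_n}. -/
/-!
The function `ξ ↦ exp (⟨x, ξ⟩ + t ⟨A ξ, ξ⟩)` generating the parabolic polynomials is the Laplace
transform `ξ ↦ ∫ G(x - y, t) exp ⟨y, ξ⟩ dy` of the Gaussian kernel (`laplace_Gfun`). The kernel is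
integrable against every exponential, so one may differentiate under the integral sign any number of
times, each `∂/∂ξ_i` producing a factor `y_i` (`pderivOp_lap`, `multiDeriv_lap`). Applying `D^α` and
setting `ξ = 0` gives the representation.
-/

open MeasureTheory Matrix Real

/-- The fundamental solution of the parabolic operator `H = Σ a_hk ∂²/∂x_h∂x_k - ∂/∂t`. -/
noncomputable def Gfun (n : ℕ) (A : Matrix (Fin n) (Fin n) ℝ) (x : Fin n → ℝ) (t : ℝ) : ℝ :=
  if 0 < t then
    (4 * Real.pi * t) ^ (-(n : ℝ) / 2) * A.det ^ (-(1 : ℝ) / 2) *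
      Real.exp (-((A⁻¹).mulVec x ⬝ᵥ x) / (4 * t))
  else 0

/-- Partial derivative in the `i`-th coordinate direction. -/
noncomputable def pderivOp (n : ℕ) (i : Fin n) (f : (Fin n → ℝ) → ℝ) : (Fin n → ℝ) → ℝ :=
  fun ξ => fderiv ℝ f ξ (Pi.single i 1)

/-- The multi-index derivative `D^α = ∂^{α₁}_{ξ₁} ⋯ ∂^{αₙ}_{ξₙ}`. -/
noncomputable def multiDeriv (n : ℕ) (α : Fin n → ℕ) (f : (Fin n → ℝ) → ℝ) :
    (Fin n → ℝ) → ℝ :=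
  ((List.ofFn fun i : Fin n => (pderivOp n i)^[α i]).foldr (· ∘ ·) id) f

/-- The parabolic polynomial `v_α(x,t) = D^α_ξ (exp(⟨x,ξ⟩ + t Σ a_hk ξ_h ξ_k))|_{ξ=0}`. -/
noncomputable def vPoly (n : ℕ) (A : Matrix (Fin n) (Fin n) ℝ) (α : Fin n → ℕ)
    (x : Fin n → ℝ) (t : ℝ) : ℝ :=
  multiDeriv n α (fun ξ => Real.exp (x ⬝ᵥ ξ + t * ∑ h, ∑ k, A h k * ξ h * ξ k)) 0

theorem gaussian_mgf_std (n : ℕ) (b : ℝ) (hb : 0 < b) (c : Fin n → ℝ) :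
    Integrable (fun w : Fin n → ℝ => Real.exp (-b * ∑ i, w i ^ 2 + ∑ i, c i * w i)) ∧
    ∫ w : Fin n → ℝ, Real.exp (-b * ∑ i, w i ^ 2 + ∑ i, c i * w i) =
      (π / b) ^ ((n : ℝ) / 2) * Real.exp ((∑ i, c i ^ 2) / (4 * b)) := by
  have h1 := GaussianFourier.integrable_cexp_neg_mul_sum_add (ι := Fin n) (b := (b : ℂ))
    (by simpa using hb) (fun i => (c i : ℂ))
  have h2 := GaussianFourier.integral_cexp_neg_mul_sum_add (ι := Fin n) (b := (b : ℂ))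
    (by simpa using hb) (fun i => (c i : ℂ))
  have e : ∀ w : Fin n → ℝ, Complex.exp (-(b : ℂ) * ∑ i, (w i : ℂ) ^ 2 + ∑ i, (c i : ℂ) * w i)
      = ((Real.exp (-b * ∑ i, w i ^ 2 + ∑ i, c i * w i) : ℝ) : ℂ) := by
    intro w; push_cast; rfl
  simp only [e] at h1 h2
  constructor
  · exact h1.re
  · rw [integral_complex_ofReal] at h2
    have e2 : ((π : ℂ) / b) ^ ((Fintype.card (Fin n) : ℂ) / 2) *
        Complex.exp ((∑ i, (c i : ℂ) ^ 2) / (4 * b)) =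
        (((π / b) ^ ((n : ℝ) / 2) * Real.exp ((∑ i, c i ^ 2) / (4 * b)) : ℝ) : ℂ) := by
      rw [Complex.ofReal_mul, Complex.ofReal_cpow (by positivity)]
      push_cast
      simp
    rw [e2] at h2
    exact_mod_cast h2

/-- Linear change of variables `z = M w`, transferring integrability as well as the integral. -/
theorem integral_linear_subst (n : ℕ) (M : Matrix (Fin n) (Fin n) ℝ) (hM : M.det ≠ 0)
    (f : (Fin n → ℝ) → ℝ) (hf : Integrable (fun w => f (M *ᵥ w))) :
    Integrable f ∧ ∫ z, f z = |M.det| * ∫ w, f (M *ᵥ w) := by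
  have hmap := Real.map_matrix_volume_pi_eq_smul_volume_pi hM
  have hemb : MeasurableEmbedding (Matrix.toLin' M) := by
    have : IsUnit M := (Matrix.isUnit_iff_isUnit_det M).2 hM.isUnit
    refine (LinearMap.continuous_of_finiteDimensional _).measurableEmbedding ?_
    exact Matrix.mulVec_injective_of_isUnit this
  have h0 : ENNReal.ofReal |M.det⁻¹| ≠ 0 := by simpa using hM
  constructor
  · have : Integrable f (Measure.map (Matrix.toLin' M) volume) := by
      rw [hemb.integrable_map_iff]; exact hf
    rw [hmap] at this
    exact (integrable_smul_measure h0 ENNReal.ofReal_ne_top).1 this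
  · have : ∫ w, f (M *ᵥ w) = ∫ z, f z ∂(Measure.map (Matrix.toLin' M) volume) := by
      rw [hemb.integral_map]; rfl
    rw [this, hmap, integral_smul_measure, ENNReal.toReal_ofReal (abs_nonneg _), abs_inv,
      smul_eq_mul, mul_inv_cancel_left₀ (abs_ne_zero.2 hM)]

theorem exists_eq_transpose_mul_self (n : ℕ) (A : Matrix (Fin n) (Fin n) ℝ) (hA : A.PosDef) :
    ∃ B : Matrix (Fin n) (Fin n) ℝ, A = Bᵀ * B := by
  open scoped MatrixOrder Matrix.Norms.L2Operator in
  obtain ⟨B, hB⟩ := CStarAlgebra.nonneg_iff_eq_star_mul_self.1 hA.posSemidef.nonneg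
  exact ⟨B, by simpa [Matrix.star_eq_conjTranspose] using hB⟩

/-- The Gaussian `y ↦ G(x - y, t)` has a finite Laplace transform everywhere, equal to the generating
function of the parabolic polynomials. With `A = Bᵀ B`, the substitution `x - y = Bᵀ w` turns the
quadratic form `⟨A⁻¹ z, z⟩` into `|w|²`, and the exponent produced by the standard Gaussian is
`t |B ξ|² = t ⟨A ξ, ξ⟩`. -/
theorem laplace_Gfun (n : ℕ) (A : Matrix (Fin n) (Fin n) ℝ) (hA : A.PosDef)
    (x : Fin n → ℝ) (t : ℝ) (ht : 0 < t) (ξ : Fin n → ℝ) :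
    Integrable (fun y : Fin n → ℝ => Gfun n A (x - y) t * Real.exp (y ⬝ᵥ ξ)) ∧
    ∫ y : Fin n → ℝ, Gfun n A (x - y) t * Real.exp (y ⬝ᵥ ξ) =
      Real.exp (x ⬝ᵥ ξ + t * ∑ h, ∑ k, A h k * ξ h * ξ k) := by
  obtain ⟨B, rfl⟩ := exists_eq_transpose_mul_self n A hA
  have hdet := hA.det_pos
  rw [Matrix.det_mul, Matrix.det_transpose] at hdet
  have hB : B.det ≠ 0 := by
    intro h; simp [h] at hdet
  have hBu : IsUnit B.det := hB.isUnit
  have hBtu : IsUnit Bᵀ.det := by rwa [Matrix.det_transpose]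
  set c : ℝ := (4 * π * t) ^ (-(n : ℝ) / 2) * (Bᵀ * B).det ^ (-(1 : ℝ) / 2) with hc
  set f : (Fin n → ℝ) → ℝ := fun z =>
    c * Real.exp (-((Bᵀ * B)⁻¹ *ᵥ z ⬝ᵥ z) / (4 * t)) * Real.exp ((x - z) ⬝ᵥ ξ) with hf
  have hquad : ∀ w : Fin n → ℝ, (Bᵀ * B)⁻¹ *ᵥ (Bᵀ *ᵥ w) ⬝ᵥ (Bᵀ *ᵥ w) = ∑ i, w i ^ 2 := by
    intro w
    rw [Matrix.mul_inv_rev, Matrix.mulVec_mulVec, Matrix.mul_assoc, Matrix.nonsing_inv_mul _ hBtu,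
      Matrix.mul_one, Matrix.dotProduct_mulVec, Matrix.vecMul_transpose, Matrix.mulVec_mulVec,
      Matrix.mul_nonsing_inv _ hBu, Matrix.one_mulVec]
    simp [dotProduct, sq]
  have hlin : ∀ w : Fin n → ℝ, (Bᵀ *ᵥ w) ⬝ᵥ ξ = ∑ i, (B *ᵥ ξ) i * w i := by
    intro w
    rw [Matrix.mulVec_transpose, ← Matrix.dotProduct_mulVec, dotProduct_comm]
    rfl
  have hsq : ∑ i, (B *ᵥ ξ) i ^ 2 = ∑ h, ∑ k, (Bᵀ * B) h k * ξ h * ξ k := by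
    have h1 : ∑ i, (B *ᵥ ξ) i ^ 2 = ξ ⬝ᵥ ((Bᵀ * B) *ᵥ ξ) := by
      rw [← Matrix.mulVec_mulVec, Matrix.dotProduct_mulVec, Matrix.vecMul_transpose]
      simp [dotProduct, sq]
    rw [h1]
    simp only [dotProduct, Matrix.mulVec, Finset.mul_sum]
    exact Finset.sum_congr rfl fun h _ => Finset.sum_congr rfl fun k _ => by ring
  have hcomp : ∀ w : Fin n → ℝ, f (Bᵀ *ᵥ w) = c * Real.exp (x ⬝ᵥ ξ) *
      Real.exp (-(1 / (4 * t)) * ∑ i, w i ^ 2 + ∑ i, (-(B *ᵥ ξ) i) * w i) := by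
    intro w
    simp only [hf, hquad, sub_dotProduct, hlin]
    rw [mul_assoc, ← Real.exp_add, mul_assoc c, ← Real.exp_add]
    congr 2
    simp only [neg_mul, Finset.sum_neg_distrib]
    ring
  have hg := gaussian_mgf_std n (1 / (4 * t)) (by positivity) (fun i => -(B *ᵥ ξ) i)
  have hcov := integral_linear_subst n Bᵀ hBtu.ne_zero f (by
    simp only [hcomp]
    exact hg.1.const_mul _)
  have hG : ∀ y, Gfun n (Bᵀ * B) (x - y) t * Real.exp (y ⬝ᵥ ξ) = f (x - y) := by
    intro y
    simp [Gfun, ht, hf, hc]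
  simp only [hG]
  refine ⟨hcov.1.comp_sub_left x, ?_⟩
  rw [integral_sub_left_eq_self f volume x, hcov.2]
  simp only [hcomp]
  rw [integral_const_mul, hg.2, hc]
  have e1 : π / (1 / (4 * t)) = 4 * π * t := by field_simp
  have e2 : (∑ i, (-(B *ᵥ ξ) i) ^ 2) / (4 * (1 / (4 * t))) =
      t * ∑ h, ∑ k, (Bᵀ * B) h k * ξ h * ξ k := by
    rw [← hsq]; simp only [neg_sq]; field_simp
  have e3 : |Bᵀ.det| * (Bᵀ * B).det ^ (-(1 : ℝ) / 2) = 1 := by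
    rw [Matrix.det_mul, Matrix.det_transpose, ← abs_mul_abs_self B.det, ← sq, neg_div,
      Real.rpow_neg (by positivity), ← Real.sqrt_eq_rpow, Real.sqrt_sq (abs_nonneg _)]
    exact mul_inv_cancel₀ (abs_ne_zero.2 hB)
  have e4 : (4 * π * t) ^ (-(n : ℝ) / 2) * (4 * π * t) ^ ((n : ℝ) / 2) = 1 := by
    rw [← Real.rpow_add (by positivity), neg_div, neg_add_cancel, Real.rpow_zero]
  rw [e1, e2, Real.exp_add]
  linear_combination (Real.exp (x ⬝ᵥ ξ) *
    Real.exp (t * ∑ h, ∑ k, (Bᵀ * B) h k * ξ h * ξ k)) *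
    ((|Bᵀ.det| * (Bᵀ * B).det ^ (-(1 : ℝ) / 2)) * e4 + e3)

/-- Integrability against every exponential `exp (c ‖y‖)` (`‖·‖` is the sup norm). This class is stable
under multiplication by coordinates and is large enough to differentiate `lap` under the integral. -/
def ExpInt (n : ℕ) (h : (Fin n → ℝ) → ℝ) : Prop :=
  AEStronglyMeasurable h ∧ ∀ c : ℝ, Integrable (fun y => Real.exp (c * ‖y‖) * h y)

/-- The two-sided Laplace transform `ξ ↦ ∫ h(y) exp ⟨y, ξ⟩ dy`. -/
noncomputable def lap (n : ℕ) (h : (Fin n → ℝ) → ℝ) (ξ : Fin n → ℝ) : ℝ :=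
  ∫ y, h y * Real.exp (y ⬝ᵥ ξ)

theorem abs_dot_le (n : ℕ) (y ξ : Fin n → ℝ) : |y ⬝ᵥ ξ| ≤ n * ‖ξ‖ * ‖y‖ := by
  calc |y ⬝ᵥ ξ| ≤ ∑ i, |y i * ξ i| := Finset.abs_sum_le_sum_abs _ _
    _ ≤ ∑ _i : Fin n, ‖y‖ * ‖ξ‖ := Finset.sum_le_sum fun i _ => by
        rw [abs_mul]
        exact mul_le_mul (norm_le_pi_norm y i) (norm_le_pi_norm ξ i) (abs_nonneg _) (norm_nonneg _)
    _ = n * ‖ξ‖ * ‖y‖ := by simp; ring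

/-- Finiteness of the Laplace transform of `|h|` at the points `± c e_i` is enough, since
`exp (c ‖y‖) ≤ ∑ i, (exp (c y_i) + exp (-c y_i))`. This inequality is where positive
dimension enters: for `n = 0` the sum is empty. -/
theorem ExpInt.of_dot {n : ℕ} (hn : 0 < n) {h : (Fin n → ℝ) → ℝ}
    (hh : ∀ ξ : Fin n → ℝ, Integrable (fun y => h y * Real.exp (y ⬝ᵥ ξ))) : ExpInt n h := by
  have hm : AEStronglyMeasurable h := by simpa using (hh 0).aestronglyMeasurable
  refine ⟨hm, fun c => ?_⟩
  have hs : Integrable (fun y : Fin n → ℝ => ∑ i, (‖h y * Real.exp (y ⬝ᵥ (Pi.single i c))‖ +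
      ‖h y * Real.exp (y ⬝ᵥ (Pi.single i (-c)))‖)) :=
    integrable_finsetSum _ fun i _ => (hh _).norm.add (hh _).norm
  refine hs.mono' ?_ (.of_forall fun y => ?_)
  · exact (by fun_prop : Continuous fun y : Fin n → ℝ =>
      Real.exp (c * ‖y‖)).aestronglyMeasurable.mul hm
  · have : Nonempty (Fin n) := ⟨⟨0, hn⟩⟩
    obtain ⟨i, hi⟩ : ∃ i, ‖y‖ = |y i| := by
      obtain ⟨i, -, hi⟩ := Finset.exists_max_image Finset.univ (fun i => |y i|) Finset.univ_nonempty
      refine ⟨i, le_antisymm ?_ (norm_le_pi_norm y i)⟩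
      exact (pi_norm_le_iff_of_nonneg (abs_nonneg _)).2 fun j => hi j (Finset.mem_univ _)
    refine le_trans ?_ (Finset.single_le_sum (fun i _ => by positivity) (Finset.mem_univ i))
    simp only [norm_mul, Real.norm_eq_abs, Real.abs_exp, dotProduct_single, hi]
    rw [← mul_add, mul_comm]
    gcongr
    rcases abs_cases (y i) with ⟨e, -⟩ | ⟨e, -⟩ <;> rw [e]
    · rw [mul_comm]; linarith [Real.exp_pos (y i * -c)]
    · rw [show c * -y i = y i * -c by ring]; linarith [Real.exp_pos (y i * c)]

theorem ExpInt.mul_coord {n : ℕ} {h : (Fin n → ℝ) → ℝ} (hh : ExpInt n h) (i : Fin n) :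
    ExpInt n (fun y => y i * h y) := by
  have hm : AEStronglyMeasurable (fun y : Fin n → ℝ => y i * h y) :=
    (continuous_apply i).aestronglyMeasurable.mul hh.1
  refine ⟨hm, fun c => ?_⟩
  refine (hh.2 (c + 1)).norm.mono' ?_ (.of_forall fun y => ?_)
  · exact (by fun_prop : Continuous fun y : Fin n → ℝ =>
      Real.exp (c * ‖y‖)).aestronglyMeasurable.mul hm
  · rw [norm_mul, norm_mul, norm_mul, ← mul_assoc]
    gcongr
    rw [Real.norm_eq_abs, Real.abs_exp, Real.norm_eq_abs (Real.exp _), Real.abs_exp, add_mul,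
      Real.exp_add, one_mul]
    gcongr
    linarith [norm_le_pi_norm y i, Real.add_one_le_exp ‖y‖]

/-- Differentiation under the integral sign: `∂/∂ξ_i` of a Laplace transform multiplies the density by
`y_i`. On the unit ball around `ξ` the derivative of the integrand is dominated by
`n exp ((R + 1) ‖y‖) |h y|` with `R = n (‖ξ‖ + 1)`. -/
theorem pderivOp_lap {n : ℕ} {h : (Fin n → ℝ) → ℝ} (hh : ExpInt n h) (i : Fin n) :
    pderivOp n i (lap n h) = lap n (fun y => y i * h y) := by
  funext ξ
  -- `L y` is the functional `⟨y, ·⟩`, the derivative of the exponent in `ξ`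
  let L : (Fin n → ℝ) → ((Fin n → ℝ) →L[ℝ] ℝ) := fun y => ∑ j, y j • ContinuousLinearMap.proj j
  have hL : ∀ y ζ, L y ζ = y ⬝ᵥ ζ := fun y ζ => by simp [L, dotProduct]
  have hLc : Continuous L := by fun_prop
  have hLn : ∀ y, ‖L y‖ ≤ n * Real.exp ‖y‖ := fun y => by
    refine ContinuousLinearMap.opNorm_le_bound _ (by positivity) fun ζ => ?_
    rw [hL, Real.norm_eq_abs]
    refine (abs_dot_le n y ζ).trans ?_
    have := Real.add_one_le_exp ‖y‖
    calc n * ‖ζ‖ * ‖y‖ = n * ‖y‖ * ‖ζ‖ := by ring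
      _ ≤ _ := by gcongr; linarith
  have hexp : ∀ ζ : Fin n → ℝ, Continuous fun y : Fin n → ℝ => Real.exp (y ⬝ᵥ ζ) := fun ζ => by
    simp only [dotProduct]; fun_prop
  set R : ℝ := n * (‖ξ‖ + 1) with hR
  have hE : ∀ ζ ∈ Metric.ball ξ 1, ∀ y : Fin n → ℝ, y ⬝ᵥ ζ ≤ R * ‖y‖ := by
    intro ζ hζ y
    have h1 : ‖ζ‖ ≤ ‖ξ‖ + 1 := by
      have := norm_le_norm_add_norm_sub ξ ζ
      rw [mem_ball_iff_norm'] at hζ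
      linarith
    refine (le_abs_self _).trans ((abs_dot_le n y ζ).trans ?_)
    rw [hR]; gcongr
  have hmF : ∀ ζ : Fin n → ℝ, AEStronglyMeasurable (fun y => h y * Real.exp (y ⬝ᵥ ζ)) :=
    fun ζ => hh.1.mul (hexp ζ).aestronglyMeasurable
  have hmF' : AEStronglyMeasurable (fun y => (h y * Real.exp (y ⬝ᵥ ξ)) • L y) :=
    (hmF ξ).smul hLc.aestronglyMeasurable
  have hbound : ∀ y, ∀ ζ ∈ Metric.ball ξ 1, ‖(h y * Real.exp (y ⬝ᵥ ζ)) • L y‖ ≤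
      n * ‖Real.exp ((R + 1) * ‖y‖) * h y‖ := by
    intro y ζ hζ
    rw [norm_smul, norm_mul, norm_mul, Real.norm_eq_abs (Real.exp _), Real.abs_exp,
      Real.norm_eq_abs (Real.exp _), Real.abs_exp, add_mul, Real.exp_add, one_mul]
    calc ‖h y‖ * Real.exp (y ⬝ᵥ ζ) * ‖L y‖
        ≤ ‖h y‖ * Real.exp (R * ‖y‖) * (n * Real.exp ‖y‖) := by
          gcongr
          · exact hE ζ hζ y
          · exact hLn y
      _ = _ := by ring
  have hbint : Integrable fun y : Fin n → ℝ => n * ‖Real.exp ((R + 1) * ‖y‖) * h y‖ :=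
    (hh.2 _).norm.const_mul _
  have hFint : Integrable (fun y => h y * Real.exp (y ⬝ᵥ ξ)) := by
    refine (hh.2 R).norm.mono' (hmF ξ) (.of_forall fun y => ?_)
    rw [norm_mul, norm_mul, Real.norm_eq_abs (Real.exp _), Real.abs_exp,
      Real.norm_eq_abs (Real.exp _), Real.abs_exp, mul_comm]
    gcongr
    exact hE ξ (Metric.mem_ball_self one_pos) y
  have hF'int : Integrable (fun y => (h y * Real.exp (y ⬝ᵥ ξ)) • L y) :=
    hbint.mono' hmF' (.of_forall fun y => hbound y ξ (Metric.mem_ball_self one_pos))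
  have key := hasFDerivAt_integral_of_dominated_of_fderiv_le (𝕜 := ℝ) (μ := volume)
    (F := fun ζ y => h y * Real.exp (y ⬝ᵥ ζ))
    (F' := fun ζ y => (h y * Real.exp (y ⬝ᵥ ζ)) • L y) (x₀ := ξ)
    (Metric.ball_mem_nhds ξ one_pos) (.of_forall hmF) hFint hmF' (.of_forall hbound) hbint
    (.of_forall fun y ζ _ => by
      have h1 : HasFDerivAt (fun ζ => y ⬝ᵥ ζ) (L y) ζ := by
        simpa only [← hL] using (L y).hasFDerivAt
      simpa only [smul_smul] using h1.exp.const_mul (h y))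
  have : fderiv ℝ (lap n h) ξ = ∫ y, (h y * Real.exp (y ⬝ᵥ ξ)) • L y := key.fderiv
  rw [pderivOp, this, ContinuousLinearMap.integral_apply hF'int]
  refine integral_congr_ae (.of_forall fun y => ?_)
  simp only [FunLike.coe_smul, Pi.smul_apply, hL, dotProduct_single, smul_eq_mul]
  ring

theorem iterate_pderivOp_lap {n : ℕ} (i : Fin n) (k : ℕ) {h : (Fin n → ℝ) → ℝ}
    (hh : ExpInt n h) :
    ExpInt n (fun y => y i ^ k * h y) ∧
      (pderivOp n i)^[k] (lap n h) = lap n (fun y => y i ^ k * h y) := by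
  induction k with
  | zero => simpa using hh
  | succ k ih =>
    have e : (fun y : Fin n → ℝ => y i ^ (k + 1) * h y) = fun y => y i * (y i ^ k * h y) := by
      funext y; ring
    rw [e, Function.iterate_succ_apply', ih.2, pderivOp_lap ih.1]
    exact ⟨ih.1.mul_coord i, rfl⟩

/-- The list form of `multiDeriv_lap`, matching the composition over a list in `multiDeriv`. -/
theorem foldr_lap {n : ℕ} (α : Fin n → ℕ) {h : (Fin n → ℝ) → ℝ} (hh : ExpInt n h)
    (l : List (Fin n)) :
    ExpInt n (fun y => (l.map fun i => y i ^ α i).prod * h y) ∧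
      ((l.map fun i => (pderivOp n i)^[α i]).foldr (· ∘ ·) id) (lap n h) =
        lap n (fun y => (l.map fun i => y i ^ α i).prod * h y) := by
  induction l with
  | nil => simpa using hh
  | cons i l ih =>
    simp only [List.map_cons, List.foldr_cons, List.prod_cons, Function.comp_apply, mul_assoc]
    rw [ih.2]
    exact iterate_pderivOp_lap i (α i) ih.1

theorem multiDeriv_lap {n : ℕ} (α : Fin n → ℕ) {h : (Fin n → ℝ) → ℝ} (hh : ExpInt n h) :
    multiDeriv n α (lap n h) = lap n (fun y => (∏ i, y i ^ α i) * h y) := by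
  rw [multiDeriv, List.ofFn_eq_map, (foldr_lap α hh _).2]
  simp only [← List.ofFn_eq_map, List.prod_ofFn]

theorem stmt_6 (n : ℕ) (hn : 3 ≤ n) (A : Matrix (Fin n) (Fin n) ℝ) (hA : A.PosDef)
    (α : Fin n → ℕ) (x : Fin n → ℝ) (t : ℝ) (ht : 0 < t) :
    vPoly n A α x t = ∫ y : Fin n → ℝ, Gfun n A (x - y) t * ∏ i, y i ^ α i := by
  have hexp : (fun ξ : Fin n → ℝ => Real.exp (x ⬝ᵥ ξ + t * ∑ h, ∑ k, A h k * ξ h * ξ k)) =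
      lap n (fun y => Gfun n A (x - y) t) :=
    funext fun ξ => (laplace_Gfun n A hA x t ht ξ).2.symm
  have hint : ExpInt n (fun y => Gfun n A (x - y) t) :=
    .of_dot (by omega) fun ξ => (laplace_Gfun n A hA x t ht ξ).1
  rw [vPoly, hexp, multiDeriv_lap α hint, lap]
  simp [mul_comm]
end

section
/- Let q(x,t) be a polynomial function on ℝ^{n+1} such that Hq = 0 everywhere and q(x, 0) = 0 for all x ∈ ℝ^n. Then q is identically zero on ℝ^{n+1}. -/
/-!
Write `q` as the evaluation of a polynomial `P`, so that `∂ₜP = L P` as polynomials, where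
`L = Σ a_hk ∂_h ∂_k` involves only the `x`-variables. The initial condition says `t ∣ P`.
If `P = t ^ (k + 1) * Q`, then cancelling `t ^ k` in `∂ₜP = L P = t ^ (k + 1) * L Q` leaves
`(k + 1) Q + t ∂ₜQ = t L Q`, so `t ∣ Q`. Hence every power of `t` divides `P`, and comparing
degrees gives `P = 0`.
-/

open MeasureTheory Matrix Real

/-- The parabolic operator `H u = Σ a_hk ∂²u/∂x_h∂x_k - ∂u/∂t`. -/
noncomputable def Hop (n : ℕ) (A : Matrix (Fin n) (Fin n) ℝ)
    (u : (Fin n → ℝ) × ℝ → ℝ) (z : (Fin n → ℝ) × ℝ) : ℝ :=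
  (∑ h, ∑ k, A h k *
      fderiv ℝ (fun w => fderiv ℝ u w (Pi.single h 1, 0)) z (Pi.single k 1, 0))
    - fderiv ℝ u z (0, 1)

/-- `u` is a polynomial function of the `n+1` variables `(x₁,…,xₙ,t)`. -/
def IsPolynomialFun (n : ℕ) (u : (Fin n → ℝ) × ℝ → ℝ) : Prop :=
  ∃ P : MvPolynomial (Fin n ⊕ Unit) ℝ,
    ∀ z : (Fin n → ℝ) × ℝ, u z = MvPolynomial.eval (Sum.elim z.1 fun _ => z.2) P

namespace HeatPoly

open MvPolynomial

variable {n : ℕ}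

/-- Evaluation of a polynomial in `(x, t)` as a function on `ℝⁿ × ℝ`. -/
noncomputable def ev (P : MvPolynomial (Fin n ⊕ Unit) ℝ) (z : (Fin n → ℝ) × ℝ) : ℝ :=
  eval (Sum.elim z.1 fun _ => z.2) P

/-- The coordinate direction in `ℝⁿ × ℝ` belonging to a variable. -/
def dir : Fin n ⊕ Unit → (Fin n → ℝ) × ℝ
  | .inl h => (Pi.single h 1, 0)
  | .inr _ => (0, 1)

/-- The coordinate functional on `ℝⁿ × ℝ` belonging to a variable. -/
noncomputable def coord : Fin n ⊕ Unit → (((Fin n → ℝ) × ℝ) →L[ℝ] ℝ)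
  | .inl h => (ContinuousLinearMap.proj h).comp (ContinuousLinearMap.fst ℝ _ _)
  | .inr _ => ContinuousLinearMap.snd ℝ _ _

lemma ev_X (j : Fin n ⊕ Unit) : ev (X j) = coord j := by
  ext z
  cases j <;> simp [ev, coord]

lemma coord_dir (i j : Fin n ⊕ Unit) :
    coord j (dir i) = if j = i then 1 else 0 := by
  cases i <;> cases j <;> simp [coord, dir, Pi.single_apply]

lemma differentiable_ev (P : MvPolynomial (Fin n ⊕ Unit) ℝ) : Differentiable ℝ (ev P) := by
  induction P using MvPolynomial.induction_on with
  | C a =>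
    have : ev (n := n) (C a) = fun _ => a := by ext; simp [ev]
    rw [this]; fun_prop
  | add p q hp hq =>
    have : ev (p + q) = ev p + ev q := by ext; simp [ev]
    rw [this]; exact hp.add hq
  | mul_X p j hp =>
    have : ev (p * X j) = ev p * ⇑(coord j) := by
      rw [← ev_X]; ext; simp [ev]
    rw [this]; exact hp.mul (coord j).differentiable

lemma fderiv_ev (i : Fin n ⊕ Unit) (P : MvPolynomial (Fin n ⊕ Unit) ℝ)
    (z : (Fin n → ℝ) × ℝ) : fderiv ℝ (ev P) z (dir i) = ev (pderiv i P) z := by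
  induction P using MvPolynomial.induction_on with
  | C a =>
    have : ev (n := n) (C a) = fun _ => a := by ext; simp [ev]
    rw [this]; simp [ev]
  | add p q hp hq =>
    have : ev (p + q) = ev p + ev q := by ext; simp [ev]
    rw [this, fderiv_add (differentiable_ev p z) (differentiable_ev q z)]
    simp [hp, hq, ev]
  | mul_X p j hp =>
    have : ev (p * X j) = ev p * ⇑(coord j) := by
      rw [← ev_X]; ext; simp [ev]
    rw [this, fderiv_mul (differentiable_ev p z) (coord j).differentiableAt]
    have hj : coord j z = ev (X j) z := by rw [ev_X]
    simp only [ContinuousLinearMap.fderiv, ContinuousLinearMap.add_apply,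
      ContinuousLinearMap.smul_apply, hp, coord_dir, hj, smul_eq_mul]
    by_cases h : j = i
    · subst h; simp [ev, Derivation.leibniz]
    · simp [ev, Derivation.leibniz, pderiv_X_of_ne h, h]

lemma eq_zero_of_ev {P : MvPolynomial (Fin n ⊕ Unit) ℝ} (h : ∀ z, ev P z = 0) : P = 0 := by
  refine MvPolynomial.funext fun v => ?_
  have := h (fun i => v (.inl i), v (.inr ()))
  have hv : Sum.elim (fun i => v (.inl i)) (fun _ : Unit => v (.inr ())) = v := by
    ext j; cases j <;> rfl
  simpa [ev, hv] using this

/-- Setting `t = 0` changes a polynomial by a multiple of `t`. -/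
lemma X_dvd_sub_subst (P : MvPolynomial (Fin n ⊕ Unit) ℝ) :
    X (.inr ()) ∣ P - aeval (Sum.elim (fun i => X (.inl i)) fun _ => 0) P := by
  induction P using MvPolynomial.induction_on with
  | C a => simp
  | add p q hp hq =>
    have := dvd_add hp hq
    rw [map_add]
    convert this using 1
    ring
  | mul_X p j hp =>
    rw [map_mul, aeval_X]
    cases j with
    | inl i =>
      rw [Sum.elim_inl, ← sub_mul]
      exact hp.mul_right _
    | inr u => simp

lemma X_dvd_of_ev {P : MvPolynomial (Fin n ⊕ Unit) ℝ}
    (h : ∀ x, ev P (x, 0) = 0) : X (.inr ()) ∣ P := by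
  have h1 := X_dvd_sub_subst P
  have h2 : aeval (Sum.elim (fun i => X (.inl i)) fun _ => 0) P
      = (0 : MvPolynomial (Fin n ⊕ Unit) ℝ) := by
    refine eq_zero_of_ev fun z => ?_
    rw [← h z.1]
    unfold ev
    rw [aeval_def, ← coe_eval₂Hom, ← RingHom.comp_apply]
    congr 1
    apply ringHom_ext
    · intro r; simp
    · intro j; cases j <;> simp
  rwa [h2, sub_zero] at h1

/-- The polynomial counterpart of `Σ a_hk ∂²/∂x_h∂x_k`. -/
noncomputable def spatial (A : Matrix (Fin n) (Fin n) ℝ)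
    (P : MvPolynomial (Fin n ⊕ Unit) ℝ) : MvPolynomial (Fin n ⊕ Unit) ℝ :=
  ∑ h, ∑ k, C (A h k) * pderiv (.inl k) (pderiv (.inl h) P)

lemma pderiv_inl_X_pow_mul (h : Fin n) (k : ℕ) (Q : MvPolynomial (Fin n ⊕ Unit) ℝ) :
    pderiv (.inl h) (X (.inr ()) ^ k * Q) = X (.inr ()) ^ k * pderiv (.inl h) Q := by
  have hx : pderiv (.inl h) (X (.inr ()) : MvPolynomial (Fin n ⊕ Unit) ℝ) = 0 :=
    pderiv_X_of_ne (by simp)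
  simp [Derivation.leibniz, Derivation.leibniz_pow, hx]

lemma spatial_X_pow_mul (A : Matrix (Fin n) (Fin n) ℝ) (k : ℕ)
    (Q : MvPolynomial (Fin n ⊕ Unit) ℝ) :
    spatial A (X (.inr ()) ^ k * Q) = X (.inr ()) ^ k * spatial A Q := by
  simp only [spatial, pderiv_inl_X_pow_mul, Finset.mul_sum]
  refine Finset.sum_congr rfl fun h _ => Finset.sum_congr rfl fun k _ => ?_
  ring

lemma Hop_ev (A : Matrix (Fin n) (Fin n) ℝ) (P : MvPolynomial (Fin n ⊕ Unit) ℝ)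
    (z : (Fin n → ℝ) × ℝ) :
    Hop n A (ev P) z = ev (spatial A P - pderiv (.inr ()) P) z := by
  have h1 (h : Fin n) : (fun w => fderiv ℝ (ev P) w (Pi.single h 1, 0))
      = ev (pderiv (.inl h) P) := by
    ext w; exact fderiv_ev (.inl h) P w
  have h2 (k : Fin n) (Q : MvPolynomial (Fin n ⊕ Unit) ℝ) :
      fderiv ℝ (ev Q) z (Pi.single k 1, 0) = ev (pderiv (.inl k) Q) z :=
    fderiv_ev (.inl k) Q z
  have h3 : fderiv ℝ (ev P) z (0, 1) = ev (pderiv (.inr ()) P) z := fderiv_ev (.inr ()) P z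
  simp only [Hop, h1, h2, h3]
  simp [ev, spatial]

lemma X_pow_dvd {A : Matrix (Fin n) (Fin n) ℝ} {P : MvPolynomial (Fin n ⊕ Unit) ℝ}
    (hP : spatial A P = pderiv (.inr ()) P) (h0 : X (.inr ()) ∣ P) (k : ℕ) :
    X (.inr ()) ^ (k + 1) ∣ P := by
  induction k with
  | zero => simpa using h0
  | succ k ih =>
    obtain ⟨Q, rfl⟩ := ih
    rw [spatial_X_pow_mul] at hP
    have hd : pderiv (.inr ()) (X (.inr ()) ^ (k + 1) * Q) = X (.inr ()) ^ k *
        (C ((k : ℝ) + 1) * Q + X (.inr ()) * pderiv (.inr ()) Q) := by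
      simp [Derivation.leibniz, Derivation.leibniz_pow]
      ring
    rw [hd, pow_succ, mul_assoc] at hP
    have hc := mul_left_cancel₀ (pow_ne_zero k (X_ne_zero _)) hP
    have hQ : C ((k : ℝ) + 1) * Q
        = X (.inr ()) * (spatial A Q - pderiv (.inr ()) Q) := by
      linear_combination -hc
    have hk : (k : ℝ) + 1 ≠ 0 := by positivity
    have hQ' : Q = X (.inr ()) *
        (C ((k : ℝ) + 1)⁻¹ * (spatial A Q - pderiv (.inr ()) Q)) := by
      rw [mul_left_comm, ← hQ, ← mul_assoc, ← C_mul, inv_mul_cancel₀ hk, C_1, one_mul]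
    rw [pow_succ _ (k + 1)]
    exact mul_dvd_mul_left _ ⟨_, hQ'⟩

end HeatPoly

theorem stmt_9 (n : ℕ) (hn : 3 ≤ n) (A : Matrix (Fin n) (Fin n) ℝ) (hA : A.PosDef)
    (q : (Fin n → ℝ) × ℝ → ℝ) (hq : IsPolynomialFun n q)
    (hHq : ∀ z : (Fin n → ℝ) × ℝ, Hop n A q z = 0)
    (h0 : ∀ x : Fin n → ℝ, q (x, 0) = 0) :
    ∀ z : (Fin n → ℝ) × ℝ, q z = 0 := by
  obtain ⟨P, hP⟩ := hq
  obtain rfl : q = HeatPoly.ev P := funext hP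
  have hL : HeatPoly.spatial A P = MvPolynomial.pderiv (.inr ()) P :=
    sub_eq_zero.1 (HeatPoly.eq_zero_of_ev fun z => by rw [← HeatPoly.Hop_ev, hHq])
  have hX := HeatPoly.X_pow_dvd hL (HeatPoly.X_dvd_of_ev h0) P.totalDegree
  have hP0 : P = 0 := by
    by_contra hne
    have := MvPolynomial.totalDegree_le_of_dvd_of_isDomain hX hne
    rw [MvPolynomial.totalDegree_X_pow] at this
    omega
  simp [hP0, HeatPoly.ev]
end

section
/- Let p(x,t) be a polynomial function on ℝ^{n+1} such that Hp = 0 everywhere. Then for every x ∈ ℝ^n and every t > 0, p(x,t) = ∫_{ℝ^n} G(x−y, t) p(y, 0) dy. -/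
/-!
Write `A = B Bᵀ` with `B` invertible and let `Z` be a standard Gaussian vector in `ℝⁿ`. The linear
change of variables `y = x - √(2t) B z` turns the heat integral into `E p(x - √(2t) B Z, 0)`
(`integral_Gfun`). Consider the interpolation `φ(r) = E p(x - r B Z, t - r² / 2)`, so that
`φ(0) = p(x, t)` and `φ(√(2t))` is the heat integral. Differentiating under the expectation gives
terms linear in `Z`; Gaussian integration by parts, `E[Z_j F(Z)] = E[∂_j F(Z)]`, transforms them
into second derivatives, and altogether `φ'(r) = r E (Hp)(x - r B Z, t - r² / 2) = 0`
(`gaussE_pderiv_param`). Hence `φ` is constant.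

Since `p` is a polynomial, everything under the expectation is a polynomial in `(z, r)`. Working with
`MvPolynomial` and its formal derivatives, differentiation under the integral
(`hasDerivAt_gaussE`) and integration by parts (`gaussE_stein`) only need to be checked on
monomials, where they reduce to the recursion for the moments of the one-dimensional Gaussian
(`gaussMoment_succ`).
-/

open MeasureTheory Matrix Real

open ProbabilityTheory MvPolynomial

/-! ### Moments of the standard Gaussian -/

lemma hasDerivAt_gaussianPDF (z : ℝ) :
    HasDerivAt (fun z => -gaussianPDFReal 0 1 z) (z * gaussianPDFReal 0 1 z) z := by
  have h : HasDerivAt (fun z : ℝ => -(z - 0) ^ 2 / (2 * ((1 : NNReal) : ℝ))) (-z) z := by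
    have := ((((hasDerivAt_id z).sub_const 0).pow 2).neg).div_const (2 * ((1 : NNReal) : ℝ))
    exact this.congr_deriv (by simp; ring)
  have h2 := ((h.exp).const_mul ((√(2 * π * ((1 : NNReal) : ℝ)))⁻¹)).neg
  refine h2.congr_deriv ?_
  rw [gaussianPDFReal_def]
  ring

lemma integrable_gaussianPDF_mul_pow (k : ℕ) :
    Integrable (fun z : ℝ => gaussianPDFReal 0 1 z * z ^ k) := by
  have h := (integrable_rpow_mul_exp_neg_mul_sq (b := 1 / 2) (by norm_num) (s := k)
    (by have : (0 : ℝ) ≤ k := k.cast_nonneg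
        linarith)).const_mul ((√(2 * π * ((1 : NNReal) : ℝ)))⁻¹)
  refine h.congr (.of_forall fun z => ?_)
  simp only [gaussianPDFReal, rpow_natCast, NNReal.coe_one, sub_zero]
  rw [show -z ^ 2 / (2 * 1) = -(1 / 2) * z ^ 2 by ring]
  ring

/-- The `k`-th moment of the standard Gaussian on `ℝ`. -/
noncomputable def gaussMoment (k : ℕ) : ℝ := ∫ z : ℝ, gaussianPDFReal 0 1 z * z ^ k

/-- Integration by parts; for `k = 0` the factor `k` makes the truncated exponent harmless. -/
lemma gaussMoment_succ (k : ℕ) : gaussMoment (k + 1) = k * gaussMoment (k - 1) := by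
  have h := integral_mul_deriv_eq_deriv_mul_of_integrable
    (u := fun z : ℝ => z ^ k) (u' := fun z : ℝ => k * z ^ (k - 1))
    (v := fun z => -gaussianPDFReal 0 1 z) (v' := fun z => z * gaussianPDFReal 0 1 z)
    (fun z _ => hasDerivAt_pow k z) (fun z _ => hasDerivAt_gaussianPDF z)
    ((integrable_gaussianPDF_mul_pow (k + 1)).congr (.of_forall fun z => by
      simp only [Pi.mul_apply]; ring))
    (((integrable_gaussianPDF_mul_pow (k - 1)).const_mul (-(k : ℝ))).congr
      (.of_forall fun z => by simp only [Pi.mul_apply]; ring))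
    ((integrable_gaussianPDF_mul_pow k).neg.congr (.of_forall fun z => by
      simp only [Pi.mul_apply, Pi.neg_apply]; ring))
  unfold gaussMoment
  rw [← integral_const_mul]
  calc _ = ∫ z : ℝ, z ^ k * (z * gaussianPDFReal 0 1 z) := by congr 1; ext z; ring
    _ = _ := by rw [h, ← integral_neg]; congr 1; ext z; ring

/-! ### Gaussian expectation of polynomials -/

/-- The expectation of `F(Z, r)` for a standard Gaussian vector `Z` in `ℝⁿ`, where `F` is a
polynomial whose variables `Sum.inl i` stand for the coordinates of `Z` and whose variable
`Sum.inr ()` stands for the parameter `r`. -/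
noncomputable def gaussE {n : ℕ} (F : MvPolynomial (Fin n ⊕ Unit) ℝ) (r : ℝ) : ℝ :=
  ∫ z : Fin n → ℝ, (∏ i, gaussianPDFReal 0 1 (z i)) * eval (Sum.elim z fun _ => r) F

section
variable {n : ℕ}

lemma gauss_mul_eval_monomial (s : Fin n ⊕ Unit →₀ ℕ) (c r : ℝ) (z : Fin n → ℝ) :
    (∏ i, gaussianPDFReal 0 1 (z i)) * eval (Sum.elim z fun _ => r) (monomial s c) =
      (c * r ^ s (.inr ())) * ∏ i, (gaussianPDFReal 0 1 (z i) * z i ^ s (.inl i)) := by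
  rw [eval_monomial, Finsupp.prod_fintype _ _ (by simp), Fintype.prod_sum_type,
    Finset.prod_mul_distrib]
  simp
  ring

lemma integrable_gauss_mul_eval (F : MvPolynomial (Fin n ⊕ Unit) ℝ) (r : ℝ) :
    Integrable fun z : Fin n → ℝ =>
      (∏ i, gaussianPDFReal 0 1 (z i)) * eval (Sum.elim z fun _ => r) F := by
  induction F using MvPolynomial.induction_on' with
  | monomial s c =>
    simp_rw [gauss_mul_eval_monomial]
    exact (Integrable.fintype_prod (f := fun i (z : ℝ) => gaussianPDFReal 0 1 z * z ^ s (.inl i))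
      fun i => integrable_gaussianPDF_mul_pow _).const_mul _
  | add p q hp hq =>
    simp_rw [map_add, mul_add]
    exact hp.add hq

lemma gaussE_monomial (s : Fin n ⊕ Unit →₀ ℕ) (c r : ℝ) :
    gaussE (monomial s c) r = c * r ^ s (.inr ()) * ∏ i, gaussMoment (s (.inl i)) := by
  simp_rw [gaussE, gauss_mul_eval_monomial, gaussMoment]
  rw [integral_const_mul, integral_fintype_prod_volume_eq_prod
    (f := fun i (z : ℝ) => gaussianPDFReal 0 1 z * z ^ s (.inl i))]

lemma gaussE_add (F K : MvPolynomial (Fin n ⊕ Unit) ℝ) (r : ℝ) :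
    gaussE (F + K) r = gaussE F r + gaussE K r := by
  simp_rw [gaussE, map_add, mul_add]
  exact integral_add (integrable_gauss_mul_eval F r) (integrable_gauss_mul_eval K r)

lemma gaussE_sum {ι : Type*} (s : Finset ι) (F : ι → MvPolynomial (Fin n ⊕ Unit) ℝ) (r : ℝ) :
    gaussE (∑ i ∈ s, F i) r = ∑ i ∈ s, gaussE (F i) r := by
  simp_rw [gaussE, map_sum, Finset.mul_sum]
  exact integral_finsetSum _ fun i _ => integrable_gauss_mul_eval (F i) r

lemma gaussE_C_mul (c : ℝ) (F : MvPolynomial (Fin n ⊕ Unit) ℝ) (r : ℝ) :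
    gaussE (C c * F) r = c * gaussE F r := by
  simp_rw [gaussE, map_mul, eval_C, mul_left_comm _ c]
  exact integral_const_mul _ _

lemma gaussE_param_mul (F : MvPolynomial (Fin n ⊕ Unit) ℝ) (r : ℝ) :
    gaussE (X (.inr ()) * F) r = r * gaussE F r := by
  simp_rw [gaussE, map_mul, eval_X, Sum.elim_inr, mul_left_comm _ r]
  exact integral_const_mul _ _

/-- Differentiation in the parameter commutes with the expectation. -/
lemma hasDerivAt_gaussE (F : MvPolynomial (Fin n ⊕ Unit) ℝ) (r : ℝ) :
    HasDerivAt (gaussE F) (gaussE (pderiv (.inr ()) F) r) r := by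
  induction F using MvPolynomial.induction_on' with
  | monomial s c =>
    have : gaussE (monomial s c) =
        fun r : ℝ => c * r ^ s (.inr ()) * ∏ i, gaussMoment (s (.inl i)) :=
      funext fun r => gaussE_monomial s c r
    rw [this, pderiv_monomial, gaussE_monomial]
    refine (((hasDerivAt_pow (s (.inr ())) r).const_mul c).mul_const _).congr_deriv ?_
    simp [mul_assoc]
  | add p q hp hq =>
    have : gaussE (p + q) = gaussE p + gaussE q := funext fun r => gaussE_add p q r
    rw [this, map_add, gaussE_add]
    exact hp.add hq

/-- Gaussian integration by parts (Stein's identity) for polynomials. -/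
lemma gaussE_stein (j : Fin n) (F : MvPolynomial (Fin n ⊕ Unit) ℝ) (r : ℝ) :
    gaussE (X (.inl j) * F) r = gaussE (pderiv (.inl j) F) r := by
  induction F using MvPolynomial.induction_on' with
  | monomial s c =>
    rw [X, monomial_mul, pderiv_monomial, gaussE_monomial, gaussE_monomial,
      Fintype.prod_eq_mul_prod_compl j, Fintype.prod_eq_mul_prod_compl j]
    have h1 : ∀ i ∈ ({j}ᶜ : Finset (Fin n)),
        gaussMoment ((Finsupp.single (Sum.inl j) 1 + s : Fin n ⊕ Unit →₀ ℕ) (.inl i)) =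
        gaussMoment ((s - Finsupp.single (Sum.inl j) 1 : Fin n ⊕ Unit →₀ ℕ) (.inl i)) := by
      intro i hi
      have : j ≠ i := by simpa [eq_comm] using hi
      simp [this]
    rw [Finset.prod_congr rfl h1]
    simp only [Finsupp.coe_add, Finsupp.coe_tsub, Pi.add_apply, Pi.sub_apply,
      Finsupp.single_eq_same, ne_eq, reduceCtorEq, not_false_eq_true, Finsupp.single_eq_of_ne,
      zero_add, tsub_zero, one_mul]
    rw [add_comm 1, gaussMoment_succ]
    ring
  | add p q hp hq =>
    rw [mul_add, gaussE_add, map_add, gaussE_add, hp, hq]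

lemma gaussE_of_eval_eq {F : MvPolynomial (Fin n ⊕ Unit) ℝ} {r c : ℝ}
    (h : ∀ z : Fin n → ℝ, eval (Sum.elim z fun _ => r) F = c) : gaussE F r = c := by
  simp_rw [gaussE, h]
  rw [integral_mul_const, integral_fintype_prod_volume_eq_prod
    (f := fun _ (z : ℝ) => gaussianPDFReal 0 1 z)]
  simp [integral_gaussianPDFReal_eq_one 0 (v := 1) one_ne_zero]

/-! ### Chain rules -/

lemma pderiv_aeval_sum {σ τ : Type*} [Fintype σ] (f : σ → MvPolynomial τ ℝ) (j : τ)
    (P : MvPolynomial σ ℝ) :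
    pderiv j (aeval f P) = ∑ i, aeval f (pderiv i P) * pderiv j (f i) := by
  classical
  induction P using MvPolynomial.induction_on with
  | C a => simp [algebraMap_eq]
  | add p q hp hq => simp only [map_add, hp, hq, add_mul, Finset.sum_add_distrib]
  | mul_X p k hp =>
    simp only [map_mul, aeval_X, Derivation.leibniz, hp, smul_eq_mul, map_add, pderiv_X, add_mul,
      Finset.sum_add_distrib, Finset.mul_sum]
    congr 1
    · simp [Pi.single_apply, apply_ite, ite_mul]
    · exact Finset.sum_congr rfl fun i _ => by ring

/-- The coordinate functional on `ℝⁿ⁺¹` attached to a polynomial variable: `x_i` for `Sum.inl i`,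
and `t` for `Sum.inr ()`. -/
noncomputable def coordVec (i : Fin n ⊕ Unit) : (Fin n → ℝ) × ℝ →L[ℝ] ℝ :=
  Sum.elim (fun i => (ContinuousLinearMap.proj i).comp (ContinuousLinearMap.fst ℝ _ _))
    (fun _ => ContinuousLinearMap.snd ℝ _ _) i

lemma hasFDerivAt_eval (P : MvPolynomial (Fin n ⊕ Unit) ℝ) (z : (Fin n → ℝ) × ℝ) :
    HasFDerivAt (fun z : (Fin n → ℝ) × ℝ => eval (Sum.elim z.1 fun _ => z.2) P)
      (∑ i, eval (Sum.elim z.1 fun _ => z.2) (pderiv i P) • coordVec i) z := by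
  induction P using MvPolynomial.induction_on with
  | C a => simpa using hasFDerivAt_const a z
  | add p q hp hq =>
    simp only [map_add, add_smul, Finset.sum_add_distrib]
    exact hp.add hq
  | mul_X p k hp =>
    have hk : HasFDerivAt (fun z : (Fin n → ℝ) × ℝ =>
        (Sum.elim z.1 fun _ => z.2 : Fin n ⊕ Unit → ℝ) k) (coordVec k) z := by
      have h := (coordVec k).hasFDerivAt (x := z)
      convert h using 1
      ext z
      rcases k with k | k <;> simp [coordVec]
    simp only [map_mul, eval_X]
    refine (hp.mul hk).congr_fderiv ?_
    simp only [Derivation.leibniz, smul_eq_mul, map_add, map_mul, eval_X, pderiv_X, add_smul,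
      Finset.sum_add_distrib, Finset.smul_sum, smul_smul]
    congr 1
    simp [Pi.single_apply, apply_ite, ite_smul]

lemma fderiv_eval_single (P : MvPolynomial (Fin n ⊕ Unit) ℝ) (z : (Fin n → ℝ) × ℝ) (h : Fin n) :
    fderiv ℝ (fun z : (Fin n → ℝ) × ℝ => eval (Sum.elim z.1 fun _ => z.2) P) z
      (Pi.single h 1, 0) = eval (Sum.elim z.1 fun _ => z.2) (pderiv (.inl h) P) := by
  rw [(hasFDerivAt_eval P z).fderiv]
  simp [coordVec, Pi.single_apply]

lemma fderiv_eval_time (P : MvPolynomial (Fin n ⊕ Unit) ℝ) (z : (Fin n → ℝ) × ℝ) :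
    fderiv ℝ (fun z : (Fin n → ℝ) × ℝ => eval (Sum.elim z.1 fun _ => z.2) P) z
      (0, 1) = eval (Sum.elim z.1 fun _ => z.2) (pderiv (.inr ()) P) := by
  rw [(hasFDerivAt_eval P z).fderiv]
  simp [coordVec]

/-! ### The interpolation between time `t` and time `0` -/

/-- The substitution `x ↦ x - r B z`, `t ↦ t - r² / 2` of polynomial variables, at a fixed base
point `(x, t)`: the new variables are the coordinates of `z` and the parameter `r`. -/
noncomputable def heatSubst (B : Matrix (Fin n) (Fin n) ℝ) (x : Fin n → ℝ) (t : ℝ) :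
    Fin n ⊕ Unit → MvPolynomial (Fin n ⊕ Unit) ℝ :=
  Sum.elim (fun i => C (x i) - X (.inr ()) * ∑ j, C (B i j) * X (.inl j))
    (fun _ => C t - C (1 / 2) * X (.inr ()) ^ 2)

lemma eval_aeval_heatSubst (B : Matrix (Fin n) (Fin n) ℝ) (x : Fin n → ℝ) (t r : ℝ)
    (z : Fin n → ℝ) (P : MvPolynomial (Fin n ⊕ Unit) ℝ) :
    eval (Sum.elim z fun _ => r) (aeval (heatSubst B x t) P) =
      eval (Sum.elim (x - r • B.mulVec z) fun _ => t - r ^ 2 / 2) P := by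
  induction P using MvPolynomial.induction_on with
  | C a => simp [algebraMap_eq]
  | add p q hp hq => simp only [map_add, hp, hq]
  | mul_X p k hp =>
    simp only [map_mul, hp, aeval_X, eval_X]
    congr 1
    rcases k with k | k
    · simp [heatSubst, mulVec, dotProduct]
    · simp [heatSubst]
      ring

lemma pderiv_param_heatSubst (B : Matrix (Fin n) (Fin n) ℝ) (x : Fin n → ℝ) (t : ℝ)
    (P : MvPolynomial (Fin n ⊕ Unit) ℝ) :
    pderiv (.inr ()) (aeval (heatSubst B x t) P) =
      (∑ i, ∑ j, C (-B i j) * (X (.inl j) * aeval (heatSubst B x t) (pderiv (.inl i) P)))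
        + C (-1) * (X (.inr ()) * aeval (heatSubst B x t) (pderiv (.inr ()) P)) := by
  rw [pderiv_aeval_sum, Fintype.sum_sum_type]
  congr 1
  · refine Finset.sum_congr rfl fun i _ => ?_
    have : pderiv (.inr ()) (heatSubst B x t (.inl i)) = -∑ j, C (B i j) * X (.inl j) := by
      simp [heatSubst, pderiv_X, Derivation.leibniz]
    rw [this, mul_neg, Finset.mul_sum, ← Finset.sum_neg_distrib]
    refine Finset.sum_congr rfl fun j _ => ?_
    rw [C_neg]
    ring
  · have : pderiv (.inr ()) (heatSubst B x t (.inr ())) = -X (.inr ()) := by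
      have h2 : (C (2⁻¹ : ℝ) : MvPolynomial (Fin n ⊕ Unit) ℝ) * 2 = 1 := by
        rw [show (2 : MvPolynomial (Fin n ⊕ Unit) ℝ) = C 2 from (map_ofNat C 2).symm, ← C_mul]
        norm_num
      simp [heatSubst, Derivation.leibniz_pow]
      linear_combination X (Sum.inr ()) * h2
    simp [this]
    ring

lemma pderiv_space_heatSubst (B : Matrix (Fin n) (Fin n) ℝ) (x : Fin n → ℝ) (t : ℝ) (j : Fin n)
    (P : MvPolynomial (Fin n ⊕ Unit) ℝ) :
    pderiv (.inl j) (aeval (heatSubst B x t) P) =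
      ∑ k, C (-B k j) * (X (.inr ()) * aeval (heatSubst B x t) (pderiv (.inl k) P)) := by
  rw [pderiv_aeval_sum, Fintype.sum_sum_type]
  have h0 : pderiv (.inl j) (heatSubst B x t (.inr ())) = 0 := by
    simp [heatSubst, pderiv_X, Derivation.leibniz_pow]
  have h1 (k : Fin n) : pderiv (.inl j) (heatSubst B x t (.inl k)) =
      -(X (.inr ()) * C (B k j)) := by
    simp [heatSubst, pderiv_X, Derivation.leibniz, Pi.single_apply]
  simp only [h0, h1, mul_zero, Finset.sum_const_zero, add_zero]
  refine Finset.sum_congr rfl fun k _ => ?_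
  rw [C_neg]
  ring

/-- The operator `H` on polynomials. -/
noncomputable def polyH (A : Matrix (Fin n) (Fin n) ℝ) (P : MvPolynomial (Fin n ⊕ Unit) ℝ) :
    MvPolynomial (Fin n ⊕ Unit) ℝ :=
  (∑ h, ∑ k, C (A h k) * pderiv (.inl k) (pderiv (.inl h) P)) + C (-1) * pderiv (.inr ()) P

/-- Stein's identity turns the derivative of `r ↦ E P(x - r B Z, t - r² / 2)` into the expectation
of `r` times `H P` at the same point, where `H` has coefficient matrix `B Bᵀ`. -/
lemma gaussE_pderiv_param (B : Matrix (Fin n) (Fin n) ℝ) (x : Fin n → ℝ) (t r : ℝ)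
    (P : MvPolynomial (Fin n ⊕ Unit) ℝ) :
    gaussE (pderiv (.inr ()) (aeval (heatSubst B x t) P)) r =
      r * gaussE (aeval (heatSubst B x t) (polyH (B * Bᵀ) P)) r := by
  rw [pderiv_param_heatSubst]
  simp only [polyH, map_add, map_sum, map_mul, aeval_C, algebraMap_eq, gaussE_add, gaussE_sum,
    gaussE_C_mul, gaussE_stein, gaussE_param_mul, pderiv_space_heatSubst, mul_add,
    Matrix.mul_apply, transpose_apply, Finset.mul_sum, Finset.sum_mul]
  congr 1
  · refine Finset.sum_congr rfl fun i _ => ?_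
    rw [Finset.sum_comm]
    refine Finset.sum_congr rfl fun k _ => Finset.sum_congr rfl fun j _ => ?_
    rw [← C_mul, gaussE_C_mul]
    ring
  · ring

lemma Hop_eval (A : Matrix (Fin n) (Fin n) ℝ) (P : MvPolynomial (Fin n ⊕ Unit) ℝ)
    (z : (Fin n → ℝ) × ℝ) :
    Hop n A (fun z => eval (Sum.elim z.1 fun _ => z.2) P) z =
      eval (Sum.elim z.1 fun _ => z.2) (polyH A P) := by
  simp only [Hop, fderiv_eval_single, fderiv_eval_time, polyH]
  simp [sub_eq_add_neg]

/-! ### Change of variables in the heat integral -/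

/-- Under `v = √(2t) B z` the kernel, multiplied by the Jacobian, becomes the standard Gaussian
density. -/
lemma Gfun_mulVec {A B : Matrix (Fin n) (Fin n) ℝ} (hAB : A = B * Bᵀ) (hB : B.det ≠ 0) {t : ℝ}
    (ht : 0 < t) (z : Fin n → ℝ) :
    |(√(2 * t) • B).det| * Gfun n A ((√(2 * t) • B).mulVec z) t =
      ∏ i, gaussianPDFReal 0 1 (z i) := by
  have hBu : IsUnit B.det := isUnit_iff_ne_zero.mpr hB
  have hr : 0 < √(2 * t) := Real.sqrt_pos.mpr (by linarith)
  have hquad : (A⁻¹).mulVec ((√(2 * t) • B).mulVec z) ⬝ᵥ (√(2 * t) • B).mulVec z =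
      2 * t * ∑ i, z i ^ 2 := by
    have h1 : A⁻¹ * B = (Bᵀ)⁻¹ := by
      rw [hAB, Matrix.mul_inv_rev, Matrix.mul_assoc, Matrix.nonsing_inv_mul _ hBu, Matrix.mul_one]
    have h2 : ((Bᵀ)⁻¹).mulVec z ⬝ᵥ B.mulVec z = z ⬝ᵥ z := by
      rw [dotProduct_mulVec, ← mulVec_transpose, mulVec_mulVec,
        Matrix.mul_nonsing_inv _ (by rwa [det_transpose]), one_mulVec]
    rw [smul_mulVec, mulVec_smul, mulVec_mulVec, h1, smul_dotProduct, dotProduct_smul, h2,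
      smul_smul, Real.mul_self_sqrt (by linarith), dotProduct, smul_eq_mul]
    congr 1
    exact Finset.sum_congr rfl fun i _ => (sq _).symm
  have hdet : A.det ^ (-(1 : ℝ) / 2) = |B.det|⁻¹ := by
    rw [hAB, det_mul, det_transpose, neg_div, Real.rpow_neg (mul_self_nonneg _),
      ← Real.sqrt_eq_rpow, Real.sqrt_mul_self_eq_abs]
  have hpow : (4 * π * t) ^ (-(n : ℝ) / 2) = ((√(2 * π))⁻¹) ^ n * (√(2 * t) ^ n)⁻¹ := by
    have h4 : 0 ≤ 4 * π * t := by positivity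
    rw [show -(n : ℝ) / 2 = -(1 / 2 * n) by ring, Real.rpow_neg h4, Real.rpow_mul h4,
      ← Real.sqrt_eq_rpow, Real.rpow_natCast, show 4 * π * t = (2 * π) * (2 * t) by ring,
      Real.sqrt_mul (by positivity), mul_pow, mul_inv, inv_pow]
  have hexp : -(2 * t * ∑ i, z i ^ 2) / (4 * t) = ∑ i, -(z i) ^ 2 / 2 := by
    rw [← Finset.sum_div, Finset.sum_neg_distrib]
    field_simp
    ring
  rw [Gfun, if_pos ht, hquad, hdet, hpow, hexp, det_smul, Fintype.card_fin, abs_mul, abs_pow,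
    abs_of_pos hr, Real.exp_sum]
  simp only [gaussianPDFReal, NNReal.coe_one, mul_one, sub_zero, Finset.prod_mul_distrib,
    Finset.prod_const, Finset.card_univ, Fintype.card_fin]
  have : |B.det| ≠ 0 := abs_ne_zero.mpr hB
  field_simp

lemma integral_mulVec {M : Matrix (Fin n) (Fin n) ℝ} (hM : M.det ≠ 0) {f : (Fin n → ℝ) → ℝ}
    (hf : Continuous f) : ∫ v, f v = ∫ z, |M.det| * f (M.mulVec z) := by
  have h := integral_map_of_stronglyMeasurable (μ := (volume : Measure (Fin n → ℝ)))
    (φ := toLin' M) (toLin' M).continuous_of_finiteDimensional.measurable hf.stronglyMeasurable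
  rw [Real.map_matrix_volume_pi_eq_smul_volume_pi hM, integral_smul_measure,
    ENNReal.toReal_ofReal (abs_nonneg _)] at h
  simp only [toLin'_apply] at h
  rw [integral_const_mul, ← h, smul_eq_mul, ← mul_assoc, ← abs_mul, mul_inv_cancel₀ hM, abs_one,
    one_mul]

lemma continuous_Gfun (A : Matrix (Fin n) (Fin n) ℝ) {t : ℝ} (ht : 0 < t) :
    Continuous fun v => Gfun n A v t := by
  simp only [Gfun, if_pos ht]
  fun_prop

lemma integral_Gfun {A B : Matrix (Fin n) (Fin n) ℝ} (hAB : A = B * Bᵀ) (hB : B.det ≠ 0) {t : ℝ}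
    (ht : 0 < t) (x : Fin n → ℝ) {q : (Fin n → ℝ) → ℝ} (hq : Continuous q) :
    ∫ y, Gfun n A (x - y) t * q y =
      ∫ z : Fin n → ℝ, (∏ i, gaussianPDFReal 0 1 (z i)) * q (x - √(2 * t) • B.mulVec z) := by
  have h1 := integral_sub_left_eq_self (fun v => Gfun n A v t * q (x - v)) volume x
  simp only [sub_sub_cancel] at h1
  have hM : (√(2 * t) • B).det ≠ 0 := by
    rw [det_smul]
    exact mul_ne_zero (pow_ne_zero _ (Real.sqrt_pos.mpr (by linarith)).ne') hB
  have hcont : Continuous fun v => Gfun n A v t * q (x - v) :=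
    (continuous_Gfun A ht).mul (by fun_prop)
  rw [h1, integral_mulVec hM hcont]
  refine integral_congr_ae (.of_forall fun z => ?_)
  simp only
  rw [← mul_assoc, Gfun_mulVec hAB hB ht, smul_mulVec]

end

lemma exists_eq_mul_transpose {n : ℕ} {A : Matrix (Fin n) (Fin n) ℝ} (hA : A.PosDef) :
    ∃ B : Matrix (Fin n) (Fin n) ℝ, A = B * Bᵀ ∧ B.det ≠ 0 := by
  open scoped MatrixOrder in
  obtain ⟨D, hD⟩ := CStarAlgebra.nonneg_iff_eq_star_mul_self.mp hA.posSemidef.nonneg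
  have h : A = Dᵀ * Dᵀᵀ := by
    rw [hD, transpose_transpose, star_eq_conjTranspose, conjTranspose_eq_transpose_of_trivial]
  refine ⟨Dᵀ, h, fun h0 => hA.det_pos.ne' ?_⟩
  rw [h, det_mul, h0, zero_mul]

theorem stmt_10 (n : ℕ) (hn : 3 ≤ n) (A : Matrix (Fin n) (Fin n) ℝ) (hA : A.PosDef)
    (p : (Fin n → ℝ) × ℝ → ℝ) (hp : IsPolynomialFun n p)
    (hHp : ∀ z : (Fin n → ℝ) × ℝ, Hop n A p z = 0) :
    ∀ (x : Fin n → ℝ) (t : ℝ), 0 < t →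
      p (x, t) = ∫ y : Fin n → ℝ, Gfun n A (x - y) t * p (y, 0) := by
  intro x t ht
  obtain ⟨P, hP⟩ := hp
  obtain rfl : p = fun z => eval (Sum.elim z.1 fun _ => z.2) P := funext hP
  obtain ⟨B, hAB, hB⟩ := exists_eq_mul_transpose hA
  have hderiv (r : ℝ) : HasDerivAt (gaussE (aeval (heatSubst B x t) P)) 0 r := by
    refine (hasDerivAt_gaussE _ r).congr_deriv ?_
    rw [gaussE_pderiv_param, gaussE_of_eval_eq (c := 0), mul_zero]
    intro z
    rw [eval_aeval_heatSubst, ← hAB]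
    exact (Hop_eval A P (x - r • B.mulVec z, t - r ^ 2 / 2)).symm.trans (hHp _)
  -- The value at `r = 0` is `p (x, t)`; at `r = √(2t)` the time argument has reached `0`.
  have hconst := is_const_of_deriv_eq_zero (fun r => (hderiv r).differentiableAt)
    (fun r => (hderiv r).deriv) 0 (√(2 * t))
  rw [gaussE_of_eval_eq (c := eval (Sum.elim x fun _ => t) P)
    (fun z => by rw [eval_aeval_heatSubst]; simp)] at hconst
  have hq : Continuous fun y : Fin n → ℝ => eval (Sum.elim y fun _ => (0 : ℝ)) P := by
    refine (MvPolynomial.continuous_eval P).comp (continuous_pi fun i => ?_)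
    rcases i with i | i
    · exact continuous_apply i
    · exact continuous_const
  rw [integral_Gfun hAB hB ht x hq]
  refine hconst.trans ?_
  rw [gaussE]
  refine integral_congr_ae (.of_forall fun z => ?_)
  simp only
  rw [eval_aeval_heatSubst, Real.sq_sqrt (by linarith), show t - 2 * t / 2 = 0 by ring]
end

section
/- Let p(x,t) be a polynomial function on ℝ^{n+1} such that Hp = 0 everywhere. Then there exist a non-negative integer m and real constants c_α for |α| ≤ m such that p(x,t) = Σ_{|α| ≤ m} c_α v_α(x,t) for all (x,t) ∈ ℝ^{n+1}. -/
/-!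
A polynomial solution of `H p = 0` is determined by its initial datum `p(·, 0)`, and `v_α` is the
polynomial solution with datum `x^α`. Hence, if `p(x, 0) = Σ c_α x^α`, then `p = Σ c_α v_α`.

*Uniqueness* (`eq_zero_of_heatOp`). If a polynomial solution `U` vanishes for `t = 0`, then `t ∣ U`.
If `U = t^(k+1) W` with `H U = 0`, then `(k + 1) W = t H W`, hence `t ∣ W`. So every power of `t`
divides `U`, which forces `U = 0`.

*The `v_α` are polynomial solutions* (`exists_vPoly`). Let `φ = ⟨x, ξ⟩ + t Σ a_hk ξ_h ξ_k`. The
conjugates of `∂_{ξ_i}`, `∂_{x_h}`, `∂_t` by `e^φ` act on polynomials in `(x, t, ξ)`, and the first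
commutes with the other two. Since `e^{-φ} H e^φ` annihilates `1`, it annihilates the polynomial
`R = e^{-φ} D^α_ξ e^φ`. At `ξ = 0` the operator `e^{-φ} H e^φ` reduces to `H`, and `R` to `v_α`.

*Initial datum* (`vPoly_zero`). For `t = 0` one has `D^α_ξ e^{⟨x, ξ⟩} = x^α e^{⟨x, ξ⟩}`.
-/

open MeasureTheory Matrix Real

/-- The finite set of multi-indices `α` with `|α| = α₁ + ⋯ + αₙ ≤ m`. -/
noncomputable def multiIndicesLE (n m : ℕ) : Finset (Fin n → ℕ) :=
  (Finset.Icc (0 : Fin n → ℕ) fun _ => m).filter fun α => ∑ i, α i ≤ m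

open MvPolynomial

/-! ### Formal operators -/

/-- The `n + 1` coordinates `(x, t)` of space-time. -/
abbrev STVar (n : ℕ) : Type := Fin n ⊕ Unit

/-- The variables `(x, t)` together with the auxiliary variables `ξ₁, …, ξₙ`. -/
abbrev ExtVar (n : ℕ) : Type := STVar n ⊕ Fin n

/-- The operator `H` acting on formal polynomials in `(x, t)`. -/
noncomputable def heatOp (n : ℕ) (A : Matrix (Fin n) (Fin n) ℝ)
    (P : MvPolynomial (STVar n) ℝ) : MvPolynomial (STVar n) ℝ :=
  (∑ h, ∑ k, C (A h k) * pderiv (Sum.inl k) (pderiv (Sum.inl h) P)) - pderiv (Sum.inr ()) P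

/-- The quadratic form `q(ξ) = Σ a_hk ξ_h ξ_k` as a polynomial in `(x, t, ξ)`. -/
noncomputable def quadPoly (n : ℕ) (A : Matrix (Fin n) (Fin n) ℝ) :
    MvPolynomial (ExtVar n) ℝ :=
  ∑ h, ∑ k, C (A h k) * X (Sum.inr h) * X (Sum.inr k)

/-- The conjugate `e^{-φ} ∂_{ξ_i} e^{φ}`, where `φ = ⟨x, ξ⟩ + t q(ξ)`. -/
noncomputable def conjXi (n : ℕ) (A : Matrix (Fin n) (Fin n) ℝ) (i : Fin n)
    (Q : MvPolynomial (ExtVar n) ℝ) : MvPolynomial (ExtVar n) ℝ :=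
  pderiv (Sum.inr i) Q + (X (Sum.inl (Sum.inl i)) +
    X (Sum.inl (Sum.inr ())) * pderiv (Sum.inr i) (quadPoly n A)) * Q

/-- The conjugate `e^{-φ} ∂_{x_h} e^{φ}`, where `φ = ⟨x, ξ⟩ + t q(ξ)`. -/
noncomputable def conjX (n : ℕ) (h : Fin n)
    (Q : MvPolynomial (ExtVar n) ℝ) : MvPolynomial (ExtVar n) ℝ :=
  pderiv (Sum.inl (Sum.inl h)) Q + X (Sum.inr h) * Q

/-- The conjugate `e^{-φ} ∂_t e^{φ}`, where `φ = ⟨x, ξ⟩ + t q(ξ)`. -/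
noncomputable def conjT (n : ℕ) (A : Matrix (Fin n) (Fin n) ℝ)
    (Q : MvPolynomial (ExtVar n) ℝ) : MvPolynomial (ExtVar n) ℝ :=
  pderiv (Sum.inl (Sum.inr ())) Q + quadPoly n A * Q

/-- The conjugate `e^{-φ} H e^{φ}`, where `φ = ⟨x, ξ⟩ + t q(ξ)`. -/
noncomputable def conjHeat (n : ℕ) (A : Matrix (Fin n) (Fin n) ℝ)
    (Q : MvPolynomial (ExtVar n) ℝ) : MvPolynomial (ExtVar n) ℝ :=
  (∑ h, ∑ k, C (A h k) * conjX n k (conjX n h Q)) - conjT n A Q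

/-- Restriction of a polynomial in `(x, t, ξ)` to `ξ = 0`. -/
noncomputable def atXiZero (n : ℕ) :
    MvPolynomial (ExtVar n) ℝ →ₐ[ℝ] MvPolynomial (STVar n) ℝ :=
  aeval (Sum.elim X fun _ => 0)

/-- Restriction of a polynomial in `(x, t)` to `t = 0`. -/
noncomputable def atTimeZero (n : ℕ) :
    MvPolynomial (STVar n) ℝ →ₐ[ℝ] MvPolynomial (Fin n) ℝ :=
  aeval (Sum.elim X fun _ => 0)

/-! ### Algebra of the conjugated operators -/

lemma pderiv_pderiv_comm {σ : Type*} (i j : σ) (P : MvPolynomial σ ℝ) :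
    pderiv i (pderiv j P) = pderiv j (pderiv i P) := by
  classical
  have h : ⁅pderiv (R := ℝ) i, pderiv (R := ℝ) j⁆ = 0 := by
    apply MvPolynomial.derivation_ext
    intro k
    rw [Derivation.commutator_apply]
    simp only [pderiv_X, Pi.single_apply]
    split_ifs <;> simp
  have h2 := congrArg (fun D : Derivation ℝ (MvPolynomial σ ℝ) (MvPolynomial σ ℝ) => D P) h
  simpa [Derivation.commutator_apply, sub_eq_zero] using h2

lemma pderiv_quadPoly (n : ℕ) (A : Matrix (Fin n) (Fin n) ℝ) (s : STVar n) :
    pderiv (Sum.inl s) (quadPoly n A) = 0 := by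
  classical
  simp [quadPoly, pderiv_X]

/-- Conjugates of commuting partial derivatives commute. -/
lemma conjX_conjXi (n : ℕ) (A : Matrix (Fin n) (Fin n) ℝ) (h i : Fin n)
    (Q : MvPolynomial (ExtVar n) ℝ) :
    conjX n h (conjXi n A i Q) = conjXi n A i (conjX n h Q) := by
  classical
  simp only [conjX, conjXi, map_add, pderiv_mul, pderiv_pderiv_comm (Sum.inl _) (Sum.inr i),
    pderiv_quadPoly, map_zero, pderiv_X, Pi.single_apply, Sum.inl.injEq, Sum.inr.injEq,
    reduceCtorEq, if_false]
  split_ifs <;> first | (exfalso; simp_all; done) | ring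

lemma conjT_conjXi (n : ℕ) (A : Matrix (Fin n) (Fin n) ℝ) (i : Fin n)
    (Q : MvPolynomial (ExtVar n) ℝ) :
    conjT n A (conjXi n A i Q) = conjXi n A i (conjT n A Q) := by
  classical
  simp only [conjT, conjXi, map_add, pderiv_mul, pderiv_pderiv_comm (Sum.inl _) (Sum.inr i),
    pderiv_quadPoly, map_zero, pderiv_X, Pi.single_apply, Sum.inl.injEq,
    reduceCtorEq, if_false, if_true]
  ring

lemma conjXi_C_mul (n : ℕ) (A : Matrix (Fin n) (Fin n) ℝ) (i : Fin n) (a : ℝ)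
    (Q : MvPolynomial (ExtVar n) ℝ) :
    conjXi n A i (C a * Q) = C a * conjXi n A i Q := by
  simp only [conjXi, pderiv_C_mul]; ring

lemma conjXi_sub (n : ℕ) (A : Matrix (Fin n) (Fin n) ℝ) (i : Fin n)
    (Q R : MvPolynomial (ExtVar n) ℝ) :
    conjXi n A i (Q - R) = conjXi n A i Q - conjXi n A i R := by
  simp only [conjXi, map_sub]; ring

lemma conjXi_sum (n : ℕ) (A : Matrix (Fin n) (Fin n) ℝ) (i : Fin n) {ι : Type*}
    (s : Finset ι) (Q : ι → MvPolynomial (ExtVar n) ℝ) :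
    conjXi n A i (∑ j ∈ s, Q j) = ∑ j ∈ s, conjXi n A i (Q j) := by
  simp only [conjXi, map_sum, Finset.mul_sum, Finset.sum_add_distrib]

lemma conjHeat_conjXi (n : ℕ) (A : Matrix (Fin n) (Fin n) ℝ) (i : Fin n)
    (Q : MvPolynomial (ExtVar n) ℝ) :
    conjHeat n A (conjXi n A i Q) = conjXi n A i (conjHeat n A Q) := by
  simp only [conjHeat, conjXi_sub, conjXi_sum, conjXi_C_mul, conjX_conjXi, conjT_conjXi]

/-- The formal counterpart of `H e^{φ} = 0`. -/
lemma conjHeat_one (n : ℕ) (A : Matrix (Fin n) (Fin n) ℝ) : conjHeat n A 1 = 0 := by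
  classical
  simp only [conjHeat, conjX, conjT, quadPoly, pderiv_one, mul_one, zero_add, pderiv_X,
    Pi.single_apply, reduceCtorEq, if_false, sub_eq_zero]
  exact Finset.sum_congr rfl fun h _ => Finset.sum_congr rfl fun k _ => by ring

lemma atXiZero_pderiv (n : ℕ) (s : STVar n) (Q : MvPolynomial (ExtVar n) ℝ) :
    atXiZero n (pderiv (Sum.inl s) Q) = pderiv s (atXiZero n Q) := by
  classical
  induction Q using MvPolynomial.induction_on with
  | C a => simp [atXiZero]
  | add p q hp hq => simp only [map_add, hp, hq]
  | mul_X p v hp =>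
    rw [pderiv_mul, map_add, map_mul, map_mul, map_mul, pderiv_mul, hp]
    rcases v with v | v <;> simp [atXiZero, pderiv_X, Pi.single_apply]

lemma atXiZero_conjHeat (n : ℕ) (A : Matrix (Fin n) (Fin n) ℝ)
    (Q : MvPolynomial (ExtVar n) ℝ) :
    atXiZero n (conjHeat n A Q) = heatOp n A (atXiZero n Q) := by
  have hX : ∀ h, atXiZero n (X (Sum.inr h)) = 0 := by simp [atXiZero]
  have hC : ∀ a, atXiZero n (C a) = C a := by simp [atXiZero]
  have hq : atXiZero n (quadPoly n A) = 0 := by simp [quadPoly, hX]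
  simp only [conjHeat, heatOp, conjX, conjT, map_sub, map_sum, map_mul, map_add, hX, hC, hq,
    zero_mul, add_zero, atXiZero_pderiv, pderiv_mul]
  simp

lemma heatOp_sub (n : ℕ) (A : Matrix (Fin n) (Fin n) ℝ) (P Q : MvPolynomial (STVar n) ℝ) :
    heatOp n A (P - Q) = heatOp n A P - heatOp n A Q := by
  simp only [heatOp, map_sub, mul_sub, Finset.sum_sub_distrib]
  ring

lemma heatOp_C_mul (n : ℕ) (A : Matrix (Fin n) (Fin n) ℝ) (a : ℝ)
    (P : MvPolynomial (STVar n) ℝ) : heatOp n A (C a * P) = C a * heatOp n A P := by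
  simp only [heatOp, pderiv_C_mul, mul_sub, Finset.mul_sum, mul_left_comm (C a)]

lemma heatOp_sum (n : ℕ) (A : Matrix (Fin n) (Fin n) ℝ) {ι : Type*} (s : Finset ι)
    (P : ι → MvPolynomial (STVar n) ℝ) :
    heatOp n A (∑ j ∈ s, P j) = ∑ j ∈ s, heatOp n A (P j) := by
  classical
  induction s using Finset.induction_on with
  | empty => simp [heatOp]
  | insert a s ha ih =>
    rw [Finset.sum_insert ha, Finset.sum_insert ha, ← ih]
    simp only [heatOp, map_add, mul_add, Finset.sum_add_distrib]
    ring

/-! ### Uniqueness for the polynomial Cauchy problem -/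

/-- Every polynomial is congruent modulo `t` to its restriction to `t = 0`. -/
lemma X_dvd_of_atTimeZero (n : ℕ) (U : MvPolynomial (STVar n) ℝ) (hU : atTimeZero n U = 0) :
    X (Sum.inr ()) ∣ U := by
  have key : ∀ P : MvPolynomial (STVar n) ℝ,
      X (Sum.inr ()) ∣ P - rename Sum.inl (atTimeZero n P) := by
    intro P
    induction P using MvPolynomial.induction_on with
    | C a => simp [atTimeZero]
    | add p q hp hq =>
      rw [map_add, map_add, add_sub_add_comm]
      exact dvd_add hp hq
    | mul_X p v hp =>
      rw [map_mul, map_mul]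
      rcases v with v | v
      · have : rename Sum.inl (atTimeZero n (X (Sum.inl v))) = (X (Sum.inl v) :
            MvPolynomial (STVar n) ℝ) := by simp [atTimeZero]
        rw [this, ← sub_mul]
        exact hp.mul_right _
      · simp [atTimeZero]
  simpa [hU] using key U

lemma heatOp_X_pow_mul (n : ℕ) (A : Matrix (Fin n) (Fin n) ℝ) (k : ℕ)
    (W : MvPolynomial (STVar n) ℝ) :
    heatOp n A (X (Sum.inr ()) ^ (k + 1) * W) =
      X (Sum.inr ()) ^ k * (X (Sum.inr ()) * heatOp n A W - C ((k : ℝ) + 1) * W) := by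
  have h0 : ∀ (h : Fin n) (W : MvPolynomial (STVar n) ℝ),
      pderiv (Sum.inl h) (X (Sum.inr ()) ^ (k + 1) * W) =
        X (Sum.inr ()) ^ (k + 1) * pderiv (Sum.inl h) W := by
    intro h W
    rw [pderiv_mul, pderiv_pow, pderiv_X_of_ne (by simp)]
    ring
  simp only [heatOp, h0, mul_left_comm (C _) (X _ ^ (k + 1)), ← Finset.mul_sum]
  rw [pderiv_mul, pderiv_pow, pderiv_X_self]
  simp only [map_add, map_one, map_natCast, Nat.cast_add, Nat.cast_one, Nat.add_sub_cancel]
  ring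

/-- A polynomial solution with zero initial datum is divisible by every power of `t`: if
`U = t^(k+1) W` solves the equation, then `(k + 1) W = t H W`, so `t` divides `W`. -/
lemma eq_zero_of_heatOp (n : ℕ) (A : Matrix (Fin n) (Fin n) ℝ) (U : MvPolynomial (STVar n) ℝ)
    (hH : heatOp n A U = 0) (h0 : atTimeZero n U = 0) : U = 0 := by
  have hX : (X (Sum.inr ()) : MvPolynomial (STVar n) ℝ) ≠ 0 := X_ne_zero _
  have hdvd : ∀ k : ℕ, (X (Sum.inr ()) : MvPolynomial (STVar n) ℝ) ^ (k + 1) ∣ U := by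
    intro k
    induction k with
    | zero => simpa using X_dvd_of_atTimeZero n U h0
    | succ k ih =>
      obtain ⟨W, rfl⟩ := ih
      rw [heatOp_X_pow_mul, mul_eq_zero, or_iff_right (pow_ne_zero _ hX), sub_eq_zero] at hH
      have hk : ((k : ℝ) + 1) ≠ 0 := by positivity
      have hW : W = X (Sum.inr ()) * (C ((k : ℝ) + 1)⁻¹ * heatOp n A W) := by
        rw [mul_left_comm, hH, ← mul_assoc, ← C_mul, inv_mul_cancel₀ hk, C_1, one_mul]
      rw [pow_succ]
      exact mul_dvd_mul_left _ ⟨_, hW⟩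
  by_contra hU
  obtain ⟨W, hW⟩ := hdvd U.totalDegree
  have hW0 : W ≠ 0 := by rintro rfl; exact hU (by simpa using hW)
  have := congrArg totalDegree hW
  rw [totalDegree_mul_of_isDomain (pow_ne_zero _ hX) hW0, totalDegree_X_pow] at this
  omega

/-! ### Formal and analytic derivatives -/

lemma hasFDerivAt_eval_s11 {E σ : Type*} [NormedAddCommGroup E] [NormedSpace ℝ E] [Fintype σ]
    (g : E → σ → ℝ) (g' : σ → E →L[ℝ] ℝ) (y : E)
    (hg : ∀ s, HasFDerivAt (fun y => g y s) (g' s) y) (P : MvPolynomial σ ℝ) :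
    HasFDerivAt (fun y => eval (g y) P) (∑ s, eval (g y) (pderiv s P) • g' s) y := by
  classical
  induction P using MvPolynomial.induction_on with
  | C a => simpa using hasFDerivAt_const a y
  | add p q hp hq =>
    simp only [map_add, add_smul, Finset.sum_add_distrib]
    exact hp.add hq
  | mul_X p v hp =>
    have := hp.mul (hg v)
    simp only [map_mul, eval_X]
    refine this.congr_fderiv ?_
    simp only [pderiv_mul, pderiv_X, map_add, map_mul, eval_X, add_smul, Finset.sum_add_distrib,
      Pi.single_apply, Finset.smul_sum, smul_smul]
    rw [add_comm]
    congr 1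
    · exact Finset.sum_congr rfl fun s _ => by rw [mul_comm]
    · rw [Finset.sum_eq_single v]
      · simp
      · intro b _ hb; simp [hb.symm]
      · simp

/-- The value of a polynomial in `(x, t)` at a point of space-time. -/
noncomputable def evalST (n : ℕ) (P : MvPolynomial (STVar n) ℝ) (z : (Fin n → ℝ) × ℝ) : ℝ :=
  eval (Sum.elim z.1 fun _ => z.2) P

lemma fderiv_evalST (n : ℕ) (P : MvPolynomial (STVar n) ℝ) (z v : (Fin n → ℝ) × ℝ) :
    fderiv ℝ (evalST n P) z v =
      (∑ i, evalST n (pderiv (Sum.inl i) P) z * v.1 i) +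
        evalST n (pderiv (Sum.inr ()) P) z * v.2 := by
  have := hasFDerivAt_eval_s11 (E := (Fin n → ℝ) × ℝ) (fun z => Sum.elim z.1 fun _ : Unit => z.2)
    (Sum.elim (fun i => (ContinuousLinearMap.proj i).comp (ContinuousLinearMap.fst ℝ _ _))
      fun _ => ContinuousLinearMap.snd ℝ _ _) z ?_ P
  · rw [show evalST n P = fun z => eval (Sum.elim z.1 fun _ => z.2) P from rfl, this.fderiv]
    simp [evalST]
  · rintro (i | _)
    · exact ((ContinuousLinearMap.proj (R := ℝ) (φ := fun _ : Fin n => ℝ) i).comp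
        (ContinuousLinearMap.fst ℝ _ ℝ)).hasFDerivAt
    · exact (ContinuousLinearMap.snd ℝ (Fin n → ℝ) ℝ).hasFDerivAt

lemma Hop_evalST (n : ℕ) (A : Matrix (Fin n) (Fin n) ℝ) (P : MvPolynomial (STVar n) ℝ)
    (z : (Fin n → ℝ) × ℝ) : Hop n A (evalST n P) z = evalST n (heatOp n A P) z := by
  have h1 : ∀ (P : MvPolynomial (STVar n) ℝ) (h : Fin n) (w : (Fin n → ℝ) × ℝ),
      fderiv ℝ (evalST n P) w (Pi.single h 1, 0) = evalST n (pderiv (Sum.inl h) P) w := by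
    intro P h w
    rw [fderiv_evalST]
    simp [Pi.single_apply]
  have h2 : fderiv ℝ (evalST n P) z (0, 1) = evalST n (pderiv (Sum.inr ()) P) z := by
    rw [fderiv_evalST]
    simp
  simp only [Hop, h1, h2]
  simp [evalST, heatOp]

/-- The phase `φ = ⟨x, ξ⟩ + t q(ξ)` as a function of `ξ`. -/
noncomputable def phase (n : ℕ) (A : Matrix (Fin n) (Fin n) ℝ) (x : Fin n → ℝ) (t : ℝ)
    (ξ : Fin n → ℝ) : ℝ :=
  x ⬝ᵥ ξ + t * ∑ h, ∑ k, A h k * ξ h * ξ k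

/-- The point `(x, t, ξ)` as an assignment of values to the variables. -/
def extPt (n : ℕ) (x : Fin n → ℝ) (t : ℝ) (ξ : Fin n → ℝ) : ExtVar n → ℝ :=
  Sum.elim (Sum.elim x fun _ => t) ξ

lemma hasFDerivAt_eval_extPt (n : ℕ) (x : Fin n → ℝ) (t : ℝ) (ξ : Fin n → ℝ)
    (Q : MvPolynomial (ExtVar n) ℝ) :
    HasFDerivAt (fun ξ => eval (extPt n x t ξ) Q)
      (∑ i, eval (extPt n x t ξ) (pderiv (Sum.inr i) Q) •
        (ContinuousLinearMap.proj i : (Fin n → ℝ) →L[ℝ] ℝ)) ξ := by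
  have := hasFDerivAt_eval_s11 (E := Fin n → ℝ) (fun ξ => extPt n x t ξ)
    (Sum.elim (fun _ => 0) fun i => ContinuousLinearMap.proj i) ξ ?_ Q
  · simpa using this
  · rintro (s | i)
    · exact hasFDerivAt_const _ _
    · exact (ContinuousLinearMap.proj (R := ℝ) (φ := fun _ : Fin n => ℝ) i).hasFDerivAt

/-- The phase as a polynomial in `(x, t, ξ)`. -/
noncomputable def phasePoly (n : ℕ) (A : Matrix (Fin n) (Fin n) ℝ) :
    MvPolynomial (ExtVar n) ℝ :=
  (∑ i, X (Sum.inl (Sum.inl i)) * X (Sum.inr i)) + X (Sum.inl (Sum.inr ())) * quadPoly n A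

lemma phase_eq (n : ℕ) (A : Matrix (Fin n) (Fin n) ℝ) (x : Fin n → ℝ) (t : ℝ)
    (ξ : Fin n → ℝ) : phase n A x t ξ = eval (extPt n x t ξ) (phasePoly n A) := by
  simp [phase, phasePoly, quadPoly, extPt, dotProduct]

lemma pderiv_phasePoly (n : ℕ) (A : Matrix (Fin n) (Fin n) ℝ) (i : Fin n) :
    pderiv (Sum.inr i) (phasePoly n A) = X (Sum.inl (Sum.inl i)) +
      X (Sum.inl (Sum.inr ())) * pderiv (Sum.inr i) (quadPoly n A) := by
  classical
  simp [phasePoly, pderiv_X, Pi.single_apply]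

/-- `conjXi` is indeed `∂_{ξ_i}` conjugated by `e^φ`. -/
lemma pderivOp_exp (n : ℕ) (A : Matrix (Fin n) (Fin n) ℝ) (x : Fin n → ℝ) (t : ℝ) (i : Fin n)
    (Q : MvPolynomial (ExtVar n) ℝ) :
    pderivOp n i (fun ξ => eval (extPt n x t ξ) Q * Real.exp (phase n A x t ξ)) =
      fun ξ => eval (extPt n x t ξ) (conjXi n A i Q) * Real.exp (phase n A x t ξ) := by
  funext ξ
  simp only [pderivOp, phase_eq]
  have := (hasFDerivAt_eval_extPt n x t ξ Q).fun_mul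
    (hasFDerivAt_eval_extPt n x t ξ (phasePoly n A)).exp
  rw [this.fderiv]
  simp only [_root_.add_apply, _root_.smul_apply, _root_.sum_apply,
    ContinuousLinearMap.proj_apply, smul_eq_mul, Pi.single_apply,
    mul_ite, mul_one, mul_zero, Finset.sum_ite_eq', Finset.mem_univ, if_true,
    conjXi, ← pderiv_phasePoly, map_add, map_mul]
  ring

/-! ### Parabolic polynomials -/

lemma multiDeriv_eq_foldr (n : ℕ) (α : Fin n → ℕ) (f : (Fin n → ℝ) → ℝ) :
    multiDeriv n α f =
      ((List.finRange n).map fun i => (pderivOp n i)^[α i]).foldr (· ∘ ·) id f := by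
  rw [multiDeriv, List.ofFn_eq_map]

lemma exists_iterate_pderivOp (n : ℕ) (A : Matrix (Fin n) (Fin n) ℝ) (i : Fin n) (k : ℕ)
    (Q : MvPolynomial (ExtVar n) ℝ) (hQ : conjHeat n A Q = 0) :
    ∃ R : MvPolynomial (ExtVar n) ℝ, conjHeat n A R = 0 ∧ ∀ x t,
      (pderivOp n i)^[k] (fun ξ => eval (extPt n x t ξ) Q * Real.exp (phase n A x t ξ)) =
        fun ξ => eval (extPt n x t ξ) R * Real.exp (phase n A x t ξ) := by
  induction k with
  | zero => exact ⟨Q, hQ, fun _ _ => rfl⟩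
  | succ k ih =>
    obtain ⟨R, hR, h⟩ := ih
    refine ⟨conjXi n A i R, ?_, fun x t => ?_⟩
    · rw [conjHeat_conjXi, hR]; simp [conjXi]
    · rw [Function.iterate_succ_apply', h, pderivOp_exp]

lemma exists_foldr_pderivOp (n : ℕ) (A : Matrix (Fin n) (Fin n) ℝ) (α : Fin n → ℕ)
    (l : List (Fin n)) :
    ∃ R : MvPolynomial (ExtVar n) ℝ, conjHeat n A R = 0 ∧ ∀ x t,
      (l.map fun i => (pderivOp n i)^[α i]).foldr (· ∘ ·) id
          (fun ξ => Real.exp (phase n A x t ξ)) =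
        fun ξ => eval (extPt n x t ξ) R * Real.exp (phase n A x t ξ) := by
  induction l with
  | nil => exact ⟨1, conjHeat_one n A, fun x t => by simp⟩
  | cons i l ih =>
    obtain ⟨Q, hQ, h⟩ := ih
    obtain ⟨R, hR, hiter⟩ := exists_iterate_pderivOp n A i (α i) Q hQ
    refine ⟨R, hR, fun x t => ?_⟩
    rw [List.map_cons, List.foldr_cons, Function.comp_apply, h, hiter]

/-- `v_α` is a polynomial solution of the equation: `D^α_ξ e^φ = R e^φ` with `R` annihilated by
`e^{-φ} H e^φ`, and this operator restricts to `H` on `ξ = 0`, where `e^φ = 1`. -/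
lemma exists_vPoly (n : ℕ) (A : Matrix (Fin n) (Fin n) ℝ) (α : Fin n → ℕ) :
    ∃ V : MvPolynomial (STVar n) ℝ, heatOp n A V = 0 ∧
      ∀ x t, vPoly n A α x t = evalST n V (x, t) := by
  obtain ⟨R, hR, h⟩ := exists_foldr_pderivOp n A α (List.finRange n)
  refine ⟨atXiZero n R, by rw [← atXiZero_conjHeat, hR, map_zero], fun x t => ?_⟩
  have h1 : vPoly n A α x t = multiDeriv n α (fun ξ => Real.exp (phase n A x t ξ)) 0 := rfl
  have h2 : ∀ Q : MvPolynomial (ExtVar n) ℝ,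
      eval (extPt n x t 0) Q = evalST n (atXiZero n Q) (x, t) := by
    intro Q
    induction Q using MvPolynomial.induction_on with
    | C a => simp [evalST, atXiZero]
    | add p q hp hq => simpa [evalST] using congrArg₂ (· + ·) hp hq
    | mul_X p v hp =>
      rw [map_mul, hp, map_mul]
      rcases v with v | v <;> simp [evalST, atXiZero, extPt]
  rw [h1, multiDeriv_eq_foldr, h, ← h2]
  simp [phase]

/-- The phase with `t = 0` is `⟨x, ξ⟩`, whatever the matrix. -/
lemma pderivOp_exp_dot (n : ℕ) (x : Fin n → ℝ) (i : Fin n) (c : ℝ) :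
    pderivOp n i (fun ξ => c * Real.exp (x ⬝ᵥ ξ)) =
      fun ξ => (x i * c) * Real.exp (x ⬝ᵥ ξ) := by
  have := pderivOp_exp n 0 x 0 i (C c)
  simpa [phase, conjXi, extPt] using this

lemma iterate_pderivOp_exp_dot (n : ℕ) (x : Fin n → ℝ) (i : Fin n) (c : ℝ) (k : ℕ) :
    (pderivOp n i)^[k] (fun ξ => c * Real.exp (x ⬝ᵥ ξ)) =
      fun ξ => (x i ^ k * c) * Real.exp (x ⬝ᵥ ξ) := by
  induction k with
  | zero => simp
  | succ k ih =>
    rw [Function.iterate_succ_apply', ih, pderivOp_exp_dot]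
    funext ξ
    ring

lemma vPoly_zero (n : ℕ) (A : Matrix (Fin n) (Fin n) ℝ) (α : Fin n → ℕ) (x : Fin n → ℝ) :
    vPoly n A α x 0 = ∏ i, x i ^ α i := by
  have key : ∀ l : List (Fin n),
      (l.map fun i => (pderivOp n i)^[α i]).foldr (· ∘ ·) id (fun ξ => Real.exp (x ⬝ᵥ ξ)) =
        fun ξ => (l.map fun i => x i ^ α i).prod * Real.exp (x ⬝ᵥ ξ) := by
    intro l
    induction l with
    | nil => simp
    | cons i l ih =>
      rw [List.map_cons, List.foldr_cons, Function.comp_apply, ih, iterate_pderivOp_exp_dot]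
      simp
  rw [vPoly, multiDeriv_eq_foldr]
  simp only [zero_mul, add_zero]
  rw [key]
  simp [← List.ofFn_eq_map, List.prod_ofFn]

lemma eval_eq_sum_multiIndicesLE (n : ℕ) (P : MvPolynomial (Fin n) ℝ) (x : Fin n → ℝ) :
    eval x P = ∑ α ∈ multiIndicesLE n P.totalDegree,
      coeff (Finsupp.equivFunOnFinite.symm α) P * ∏ i, x i ^ α i := by
  classical
  rw [eval_eq']
  refine Finset.sum_of_injOn (fun d => (d : Fin n → ℕ)) ?_ ?_ ?_ ?_
  · exact DFunLike.coe_injective.injOn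
  · intro d hd
    have h := le_totalDegree hd
    rw [Finsupp.sum_fintype _ _ (by simp)] at h
    simp only [multiIndicesLE, Finset.coe_filter, Finset.mem_Icc, Set.mem_ofPred_eq]
    refine ⟨⟨fun i => Nat.zero_le _, fun i => ?_⟩, h⟩
    exact (Finset.single_le_sum (f := fun i => d i) (fun _ _ => Nat.zero_le _)
      (Finset.mem_univ i)).trans h
  · intro α _ hα
    rw [notMem_support_iff.mp, zero_mul]
    intro hmem
    exact hα ⟨_, hmem, by simp⟩
  · intro d _
    congr 2
    ext i
    simp

theorem stmt_11 (n : ℕ) (hn : 3 ≤ n) (A : Matrix (Fin n) (Fin n) ℝ) (hA : A.PosDef)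
    (p : (Fin n → ℝ) × ℝ → ℝ) (hp : IsPolynomialFun n p)
    (hHp : ∀ z : (Fin n → ℝ) × ℝ, Hop n A p z = 0) :
    ∃ (m : ℕ) (c : (Fin n → ℕ) → ℝ),
      ∀ (x : Fin n → ℝ) (t : ℝ),
        p (x, t) = ∑ α ∈ multiIndicesLE n m, c α * vPoly n A α x t := by
  obtain ⟨P, hP⟩ := hp
  obtain rfl : p = evalST n P := funext hP
  choose V hVheat hV using exists_vPoly n A
  have hPheat : heatOp n A P = 0 := by
    refine MvPolynomial.funext fun s => ?_
    have h := hHp (fun i => s (Sum.inl i), s (Sum.inr ()))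
    rw [Hop_evalST, evalST] at h
    rw [map_zero, ← h]
    congr 2
    funext v
    rcases v with v | v <;> rfl
  have hzero : ∀ (Q : MvPolynomial (STVar n) ℝ) (x : Fin n → ℝ),
      eval x (atTimeZero n Q) = evalST n Q (x, 0) := by
    intro Q x
    induction Q using MvPolynomial.induction_on with
    | C a => simp [evalST, atTimeZero]
    | add p q hp hq => simpa [evalST] using congrArg₂ (· + ·) hp hq
    | mul_X p v hp =>
      rw [map_mul, map_mul, hp]
      rcases v with v | v <;> simp [evalST, atTimeZero]
  set m := (atTimeZero n P).totalDegree with hm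
  set c : (Fin n → ℕ) → ℝ :=
    fun α => coeff (Finsupp.equivFunOnFinite.symm α) (atTimeZero n P) with hc
  have hsum : ∀ x t, evalST n (∑ α ∈ multiIndicesLE n m, C (c α) * V α) (x, t) =
      ∑ α ∈ multiIndicesLE n m, c α * vPoly n A α x t := by
    intro x t
    simp [evalST, hV]
  refine ⟨m, c, fun x t => ?_⟩
  rw [← hsum]
  congr 1
  rw [← sub_eq_zero]
  apply eq_zero_of_heatOp n A
  · simp only [heatOp_sub, heatOp_sum, heatOp_C_mul, hVheat, hPheat, mul_zero,
      Finset.sum_const_zero, sub_zero]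
  · refine MvPolynomial.funext fun x => ?_
    rw [hzero, map_zero]
    have h1 : evalST n P (x, 0) = evalST n (∑ α ∈ multiIndicesLE n m, C (c α) * V α) (x, 0) := by
      rw [hsum, ← hzero, eval_eq_sum_multiIndicesLE]
      simp only [vPoly_zero, hc, hm]
    simpa [evalST, sub_eq_zero] using h1
end

section
/- For every multi-index α ∈ ℕ^n, the parabolic polynomial w_α satisfies H* w_α = 0 at every point of ℝ^{n+1}, i.e. Σ_{h,k} a_{hk} ∂²w_α/∂x_h∂x_k + ∂w_α/∂t = 0 everywhere, and moreover w_α(x, 0) = x^α for all x ∈ ℝ^n. -/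
/-! The generating function `F(x,t,ξ) = exp(⟨x,ξ⟩ - t Σ a_hk ξ_h ξ_k)` satisfies `∂_{x_h} F = ξ_h F`
and `∂_t F = -(Σ a_hk ξ_h ξ_k) F`, so it is annihilated by `H*` acting in `(x,t)`. Directional
derivatives of smooth functions commute (`dirD_comm`), so this annihilation is inherited by every
`ξ`-derivative of `F` (`Annihilated.dirD`), and restricting to `ξ = 0` gives `H* w_α = 0`.
At `t = 0` each `∂_{ξ_i}` multiplies `exp⟨x,ξ⟩` by `x_i`, which gives `w_α(x,0) = x^α`.

To allow induction, `D^α` is rewritten as a composition of first-order partial derivatives along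
a list of indices in which `i` occurs `α i` times (`multiDeriv_eq_foldr`). -/

open MeasureTheory Matrix Real

/-- The adjoint parabolic operator `H* u = Σ a_hk ∂²u/∂x_h∂x_k + ∂u/∂t`. -/
noncomputable def HstarOp (n : ℕ) (A : Matrix (Fin n) (Fin n) ℝ)
    (u : (Fin n → ℝ) × ℝ → ℝ) (z : (Fin n → ℝ) × ℝ) : ℝ :=
  (∑ h, ∑ k, A h k *
      fderiv ℝ (fun w => fderiv ℝ u w (Pi.single h 1, 0)) z (Pi.single k 1, 0))
    + fderiv ℝ u z (0, 1)

/-- The parabolic polynomial `w_α(x,t) = D^α_ξ (exp(⟨x,ξ⟩ - t Σ a_hk ξ_h ξ_k))|_{ξ=0}`. -/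
noncomputable def wPoly (n : ℕ) (A : Matrix (Fin n) (Fin n) ℝ) (α : Fin n → ℕ)
    (x : Fin n → ℝ) (t : ℝ) : ℝ :=
  multiDeriv n α (fun ξ => Real.exp (x ⬝ᵥ ξ - t * ∑ h, ∑ k, A h k * ξ h * ξ k)) 0

open scoped ContDiff

/-- The space of triples `((x, t), ξ)` on which the generating function lives. -/
abbrev TripleSpace (n : ℕ) : Type := ((Fin n → ℝ) × ℝ) × (Fin n → ℝ)

/-- The list of indices in which `i` occurs `α i` times, in increasing order. -/
def indexList (n : ℕ) (α : Fin n → ℕ) : List (Fin n) :=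
  (List.finRange n).flatMap fun i => List.replicate (α i) i

lemma foldr_replicate_eq_iterate {β γ : Type*} (op : β → γ → γ) (i : β) (k : ℕ) (f : γ) :
    (List.replicate k i).foldr op f = (op i)^[k] f := by
  induction k with
  | zero => rfl
  | succ k ih => rw [List.replicate_succ, List.foldr_cons, ih, Function.iterate_succ_apply']

lemma multiDeriv_eq_foldr_s13 (n : ℕ) (α : Fin n → ℕ) (f : (Fin n → ℝ) → ℝ) :
    multiDeriv n α f = (indexList n α).foldr (pderivOp n) f := by
  unfold multiDeriv indexList
  rw [List.ofFn_eq_map]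
  induction List.finRange n with
  | nil => rfl
  | cons i l ih =>
    rw [List.map_cons, List.foldr_cons, List.flatMap_cons, List.foldr_append, ← ih,
      foldr_replicate_eq_iterate]
    rfl

lemma prod_map_indexList (n : ℕ) (α : Fin n → ℕ) (x : Fin n → ℝ) :
    ((indexList n α).map x).prod = ∏ i, x i ^ α i := by
  rw [← List.prod_ofFn, List.ofFn_eq_map]
  unfold indexList
  induction List.finRange n with
  | nil => rfl
  | cons i l ih => simp [ih]

section DirectionalDerivative

variable {E : Type*} [NormedAddCommGroup E] [NormedSpace ℝ E]

/-- The derivative of `f` in the direction `v`. -/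
noncomputable def dirD (v : E) (f : E → ℝ) : E → ℝ := fun p => fderiv ℝ f p v

lemma contDiff_dirD (v : E) {f : E → ℝ} (hf : ContDiff ℝ ∞ f) : ContDiff ℝ ∞ (dirD v f) :=
  (hf.fderiv_right (m := ∞) (by simp)).clm_apply contDiff_const

lemma dirD_dirD_apply (v w : E) {f : E → ℝ} (hf : ContDiff ℝ ∞ f) (p : E) :
    dirD v (dirD w f) p = fderiv ℝ (fderiv ℝ f) p v w := by
  have h : DifferentiableAt ℝ (fderiv ℝ f) p :=
    ((hf.fderiv_right (m := ∞) (by simp)).differentiable (by simp)) p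
  change fderiv ℝ (fun q => fderiv ℝ f q w) p v = _
  rw [fderiv_clm_apply h (differentiableAt_const _)]
  simp

lemma dirD_comm (v w : E) {f : E → ℝ} (hf : ContDiff ℝ ∞ f) :
    dirD v (dirD w f) = dirD w (dirD v f) := by
  funext p
  rw [dirD_dirD_apply v w hf, dirD_dirD_apply w v hf]
  have h2 : minSmoothness ℝ 2 ≤ ∞ := by
    rw [minSmoothness_of_isRCLikeNormedField]
    exact WithTop.coe_le_coe.2 (le_top : (2 : ℕ∞) ≤ ⊤)
  exact (hf.contDiffAt.isSymmSndFDerivAt h2).eq v w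

end DirectionalDerivative

/-- The unit vector of the `h`-th `x`-coordinate. -/
def xDir (n : ℕ) (h : Fin n) : TripleSpace n := ((Pi.single h 1, 0), 0)

/-- The unit vector of the `t`-coordinate. -/
def tDir (n : ℕ) : TripleSpace n := ((0, 1), 0)

/-- The unit vector of the `i`-th `ξ`-coordinate. -/
def ξDir (n : ℕ) (i : Fin n) : TripleSpace n := ((0, 0), Pi.single i 1)

/-- A smooth function of `((x, t), ξ)` that is annihilated by `H*` acting in `(x, t)`. -/
structure Annihilated (n : ℕ) (A : Matrix (Fin n) (Fin n) ℝ) (f : TripleSpace n → ℝ) : Prop where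
  smooth : ContDiff ℝ ∞ f
  eq_zero : ∀ p, (∑ h, ∑ k, A h k * dirD (xDir n k) (dirD (xDir n h) f) p)
    + dirD (tDir n) f p = 0

/-- `H*` has constant coefficients, hence commutes with every directional derivative. -/
lemma Annihilated.dirD {n : ℕ} {A : Matrix (Fin n) (Fin n) ℝ} {f : TripleSpace n → ℝ}
    (hf : Annihilated n A f) (v : TripleSpace n) : Annihilated n A (dirD v f) := by
  refine ⟨contDiff_dirD v hf.smooth, fun p => ?_⟩
  have hd : ∀ {g : TripleSpace n → ℝ}, ContDiff ℝ ∞ g → DifferentiableAt ℝ g p :=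
    fun hg => hg.differentiable (by simp) p
  have h2 : ∀ h k, ContDiff ℝ ∞ (_root_.dirD (xDir n k) (_root_.dirD (xDir n h) f)) :=
    fun h k => contDiff_dirD _ (contDiff_dirD _ hf.smooth)
  have key : HasFDerivAt (fun p => (∑ h, ∑ k, A h k *
      _root_.dirD (xDir n k) (_root_.dirD (xDir n h) f) p) + _root_.dirD (tDir n) f p)
      ((∑ h, ∑ k, A h k • fderiv ℝ (_root_.dirD (xDir n k) (_root_.dirD (xDir n h) f)) p)
        + fderiv ℝ (_root_.dirD (tDir n) f) p) p :=
    (HasFDerivAt.fun_sum fun h _ => HasFDerivAt.fun_sum fun k _ =>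
      (hd (h2 h k)).hasFDerivAt.const_mul _).add (hd (contDiff_dirD _ hf.smooth)).hasFDerivAt
  rw [funext hf.eq_zero] at key
  have e := congrArg (fun L => L v) (key.unique (hasFDerivAt_const 0 p))
  simp only [_root_.add_apply, _root_.sum_apply,
    _root_.smul_apply, smul_eq_mul, _root_.zero_apply] at e
  rw [← e]
  congr 1
  · refine Finset.sum_congr rfl fun h _ => Finset.sum_congr rfl fun k _ => ?_
    rw [dirD_comm (xDir n h) v hf.smooth, dirD_comm (xDir n k) v (contDiff_dirD _ hf.smooth)]
    rfl
  · rw [dirD_comm _ v hf.smooth]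
    rfl

/-- The generating function of the parabolic polynomials. -/
noncomputable def genFun (n : ℕ) (A : Matrix (Fin n) (Fin n) ℝ) (p : TripleSpace n) : ℝ :=
  Real.exp (p.1.1 ⬝ᵥ p.2 - p.1.2 * ∑ h, ∑ k, A h k * p.2 h * p.2 k)

lemma contDiff_genFun (n : ℕ) (A : Matrix (Fin n) (Fin n) ℝ) : ContDiff ℝ ∞ (genFun n A) := by
  unfold genFun dotProduct
  fun_prop

/-- Along `(y, s)` in the `(x, t)` variables the exponent is affine, so the derivative of the
generating function is a multiple of it, with a factor depending on `ξ` only. -/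
lemma dirD_genFun (n : ℕ) (A : Matrix (Fin n) (Fin n) ℝ) (y : Fin n → ℝ) (s : ℝ) :
    dirD (((y, s), 0) : TripleSpace n) (genFun n A) =
      fun p => (y ⬝ᵥ p.2 - s * ∑ h, ∑ k, A h k * p.2 h * p.2 k) * genFun n A p := by
  funext p
  have hd : DifferentiableAt ℝ (genFun n A) p :=
    (contDiff_genFun n A).differentiable (by simp) p
  rw [dirD, ← hd.lineDeriv_eq_fderiv]
  refine HasLineDerivAt.lineDeriv ?_
  set q := ∑ h, ∑ k, A h k * p.2 h * p.2 k with hq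
  have e : ∀ r : ℝ, genFun n A (p + r • (((y, s), 0) : TripleSpace n)) =
      Real.exp ((p.1.1 ⬝ᵥ p.2 - p.1.2 * q) + r * (y ⬝ᵥ p.2 - s * q)) := by
    intro r
    simp only [genFun, Prod.fst_add, Prod.snd_add, Prod.smul_fst, Prod.smul_snd, smul_zero,
      add_zero, add_dotProduct, smul_dotProduct, smul_eq_mul, ← hq]
    congr 1
    ring
  rw [HasLineDerivAt, funext e]
  have := (((hasDerivAt_id (0 : ℝ)).mul_const (y ⬝ᵥ p.2 - s * q)).const_add
    (p.1.1 ⬝ᵥ p.2 - p.1.2 * q)).exp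
  refine this.congr_deriv ?_
  simp [genFun, ← hq, mul_comm]

lemma dirD_xDir_genFun (n : ℕ) (A : Matrix (Fin n) (Fin n) ℝ) (h : Fin n) :
    dirD (xDir n h) (genFun n A) = fun p => p.2 h * genFun n A p := by
  rw [xDir, dirD_genFun]
  simp

lemma annihilated_genFun (n : ℕ) (A : Matrix (Fin n) (Fin n) ℝ) :
    Annihilated n A (genFun n A) := by
  refine ⟨contDiff_genFun n A, fun p => ?_⟩
  have h2 : ∀ h k, dirD (xDir n k) (dirD (xDir n h) (genFun n A)) p
      = p.2 h * (p.2 k * genFun n A p) := by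
    intro h k
    rw [dirD_xDir_genFun, dirD]
    have hd : DifferentiableAt ℝ (genFun n A) p :=
      (contDiff_genFun n A).differentiable (by simp) p
    have hξ : HasFDerivAt (fun p : TripleSpace n => p.2 h)
        ((ContinuousLinearMap.proj (R := ℝ) (φ := fun _ : Fin n => ℝ) h).comp
          (ContinuousLinearMap.snd ℝ ((Fin n → ℝ) × ℝ) (Fin n → ℝ))) p :=
      ((ContinuousLinearMap.proj (R := ℝ) (φ := fun _ : Fin n => ℝ) h).comp
          (ContinuousLinearMap.snd ℝ ((Fin n → ℝ) × ℝ) (Fin n → ℝ))).hasFDerivAt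
    have hk : fderiv ℝ (genFun n A) p (xDir n k) = p.2 k * genFun n A p :=
      congrFun (dirD_xDir_genFun n A k) p
    rw [(hξ.fun_mul hd.hasFDerivAt).fderiv]
    simp [hk]
    simp [xDir]
  simp only [h2]
  rw [tDir, dirD_genFun]
  simp only [zero_dotProduct, one_mul, zero_sub, neg_mul, Finset.sum_mul]
  rw [add_neg_eq_zero]
  exact Finset.sum_congr rfl fun h _ => Finset.sum_congr rfl fun k _ => by ring

/-- The iterated `ξ`-derivative, taken on the space of triples. -/
noncomputable def ξDeriv (n : ℕ) (l : List (Fin n)) (f : TripleSpace n → ℝ) : TripleSpace n → ℝ :=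
  l.foldr (fun i => dirD (ξDir n i)) f

lemma annihilated_ξDeriv {n : ℕ} {A : Matrix (Fin n) (Fin n) ℝ} {f : TripleSpace n → ℝ}
    (hf : Annihilated n A f) (l : List (Fin n)) : Annihilated n A (ξDeriv n l f) := by
  induction l with
  | nil => exact hf
  | cons i l ih => exact ih.dirD (ξDir n i)

lemma foldr_pderivOp_slice {n : ℕ} {A : Matrix (Fin n) (Fin n) ℝ} {f : TripleSpace n → ℝ}
    (hf : Annihilated n A f) (l : List (Fin n)) (z : (Fin n → ℝ) × ℝ) :
    l.foldr (pderivOp n) (fun ξ => f (z, ξ)) = fun ξ => ξDeriv n l f (z, ξ) := by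
  induction l with
  | nil => rfl
  | cons i l ih =>
    rw [List.foldr_cons, ih]
    funext ξ
    have hd : DifferentiableAt ℝ (ξDeriv n l f) (z, ξ) :=
      (annihilated_ξDeriv hf l).smooth.differentiable (by simp) _
    have := hd.hasFDerivAt.comp ξ (hasFDerivAt_prodMk_right z ξ)
    exact congrArg (fun L => L (Pi.single i 1)) this.fderiv

lemma fderiv_slice {n : ℕ} {f : TripleSpace n → ℝ} (hf : ContDiff ℝ ∞ f)
    (ξ : Fin n → ℝ) (z v : (Fin n → ℝ) × ℝ) :
    fderiv ℝ (fun w => f (w, ξ)) z v = dirD (v, 0) f (z, ξ) := by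
  have hd : DifferentiableAt ℝ f (z, ξ) := hf.differentiable (by simp) _
  have := HasFDerivAt.comp (f := fun w => (w, ξ)) z hd.hasFDerivAt
    (hasFDerivAt_prodMk_left z ξ)
  exact congrArg (fun L => L v) this.fderiv

lemma foldr_pderivOp_exp (n : ℕ) (x : Fin n → ℝ) (l : List (Fin n)) :
    l.foldr (pderivOp n) (fun ξ => Real.exp (x ⬝ᵥ ξ)) =
      fun ξ => (l.map x).prod * Real.exp (x ⬝ᵥ ξ) := by
  induction l with
  | nil => simp
  | cons i l ih =>
    rw [List.foldr_cons, ih]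
    funext ξ
    have hdot : HasFDerivAt (fun ξ : Fin n → ℝ => x ⬝ᵥ ξ)
        (LinearMap.toContinuousLinearMap (dotProductBilin ℝ ℝ x)) ξ :=
      (LinearMap.toContinuousLinearMap (dotProductBilin ℝ ℝ x)).hasFDerivAt
    rw [pderivOp, (hdot.exp.const_mul _).fderiv]
    simp [dotProductBilin]
    ring

theorem stmt_13 (n : ℕ) (hn : 3 ≤ n) (A : Matrix (Fin n) (Fin n) ℝ) (hA : A.PosDef)
    (α : Fin n → ℕ) :
    (∀ z : (Fin n → ℝ) × ℝ, HstarOp n A (fun w => wPoly n A α w.1 w.2) z = 0) ∧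
    ∀ x : Fin n → ℝ, wPoly n A α x 0 = ∏ i, x i ^ α i := by
  constructor
  · intro z
    have hG := annihilated_ξDeriv (annihilated_genFun n A) (indexList n α)
    have hw : (fun w : (Fin n → ℝ) × ℝ => wPoly n A α w.1 w.2) =
        fun w => ξDeriv n (indexList n α) (genFun n A) (w, 0) := by
      funext w
      rw [wPoly, multiDeriv_eq_foldr_s13]
      exact congrFun (foldr_pderivOp_slice (annihilated_genFun n A) (indexList n α) w) 0
    rw [HstarOp, hw]
    simp only [fderiv_slice hG.smooth, fderiv_slice (contDiff_dirD _ hG.smooth)]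
    exact hG.eq_zero (z, 0)
  · intro x
    rw [wPoly, multiDeriv_eq_foldr_s13]
    simp only [zero_mul, sub_zero]
    rw [foldr_pderivOp_exp, prod_map_indexList]
    simp
end

section
/- Let r > 0, T* > 0, let C = B_r × (−T*, T*) ⊂ ℝ^{n+1} where B_r = {x ∈ ℝ^n : |x| < r}, and let K denote the closed cylinder B̄_r × [−T*, T*]. Suppose u : ℝ^{n+1} \ C → ℝ is continuous, u is C^∞ on the open set ℝ^{n+1} \ K and satisfies H*u = 0 there, u = 0 on (B̄_r × {−T*}) ∪ (∂B_r × [−T*, T*]), and u(z) → 0 as |z| → ∞. Then u is identically zero on ℝ^{n+1} \ C. -/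
/-!
The proof is a maximum principle for the backward heat operator `H*`, which propagates information
from large `t` downwards. It suffices to show `u ≤ 0`, since the hypotheses are invariant under
`u ↦ -u`.

The pointwise ingredient is `time_deriv_nonpos_of_isLocalMax`: if `H* u = 0` and `u(x,t) + f(t)` has
a local maximum, then `f' ≤ 0` there. Indeed all pure second derivatives of `u` in space directions
are nonpositive, hence so is `Σ a_hk ∂_h∂_k u` (write `A = Bᵀ B`), while `∂_t u = -f'`.

Above the cylinder (`t > T*`) the penalty `f(t) = -ε / (t - T*)` is used (`nonpos_above`): it is
strictly increasing and tends to `-∞` at the lid `t = T*`, where `u` is only known to be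
continuous. A positive value of `u` together with decay at infinity would then give an interior
maximum of `u + f`. By continuity `u ≤ 0` also on the lid.

Below `t = T*` the penalty `f(t) = ε (t - T*)` does the same (`nonpos_everywhere`): a positive
maximum of `u + f` cannot lie at `t = T*` nor on the rest of the boundary of the cylinder, where
`u ≤ 0`, so it is an interior local maximum, which is impossible.
-/

open MeasureTheory Matrix Real

/-- The adjoint parabolic operator `H* u = Σ a_hk ∂²u/∂x_h∂x_k + ∂u/∂t`
on functions of `(x,t) ∈ ℝⁿ × ℝ` (with the Euclidean structure on `ℝⁿ`). -/
noncomputable def HstarE (n : ℕ) (A : Matrix (Fin n) (Fin n) ℝ)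
    (u : EuclideanSpace ℝ (Fin n) × ℝ → ℝ) (z : EuclideanSpace ℝ (Fin n) × ℝ) : ℝ :=
  (∑ h, ∑ k, A h k *
      fderiv ℝ (fun w => fderiv ℝ u w (EuclideanSpace.single h 1, 0)) z
        (EuclideanSpace.single k 1, 0))
    + fderiv ℝ u z (0, 1)

open Filter Topology

/-- Second-derivative test along a line: at a local maximum of `s ↦ u (z + s v)` the second
directional derivative is nonpositive. -/
lemma second_deriv_nonpos {E : Type*} [NormedAddCommGroup E] [NormedSpace ℝ E]
    {u : E → ℝ} {z : E} (hu : ContDiffAt ℝ 2 u z) (v : E)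
    (hmax : IsLocalMax (fun s : ℝ => u (z + s • v)) 0) :
    fderiv ℝ (fderiv ℝ u) z v v ≤ 0 := by
  have hline : ∀ s : ℝ, HasDerivAt (fun s : ℝ => z + s • v) v s := fun s => by
    simpa using ((hasDerivAt_id s).smul_const v).const_add z
  have hlim : Tendsto (fun s : ℝ => z + s • v) (𝓝 0) (𝓝 z) := by
    simpa using (hline 0).continuousAt.tendsto
  have hd1 : ∀ᶠ w in 𝓝 z, DifferentiableAt ℝ u w :=
    (hu.eventually (by simp)).mono fun w hw => hw.differentiableAt (by simp)
  have hderiv : deriv (fun s : ℝ => u (z + s • v)) =ᶠ[𝓝 0]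
      fun s => fderiv ℝ u (z + s • v) v := by
    filter_upwards [hlim.eventually hd1] with s hs
    exact (hs.hasFDerivAt.comp_hasDerivAt s (hline s)).deriv
  have hd2 : DifferentiableAt ℝ (fderiv ℝ u) z :=
    (hu.fderiv_right (m := 1) (by norm_num)).differentiableAt (by simp)
  have hderiv2 : deriv (deriv (fun s : ℝ => u (z + s • v))) 0 = fderiv ℝ (fderiv ℝ u) z v v := by
    rw [hderiv.deriv_eq]
    have h0 : HasFDerivAt (fderiv ℝ u) (fderiv ℝ (fderiv ℝ u) z) (z + (0 : ℝ) • v) := by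
      simpa using hd2.hasFDerivAt
    have h1 := h0.comp_hasDerivAt (0 : ℝ) (hline 0)
    simpa using (h1.clm_apply (hasDerivAt_const (0 : ℝ) v)).deriv
  by_contra! hpos
  have hcont : ContinuousAt (fun s : ℝ => u (z + s • v)) 0 := by
    have : ContinuousAt u (z + (0 : ℝ) • v) := by simpa using hu.continuousAt
    exact ContinuousAt.comp (f := fun s : ℝ => z + s • v) this (hline 0).continuousAt
  have hmin := isLocalMin_of_deriv_deriv_pos (by rw [hderiv2]; exact hpos) hmax.deriv_eq_zero hcont
  -- Being a local minimum and a local maximum, the function is locally constant.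
  have hconst : (fun s : ℝ => u (z + s • v)) =ᶠ[𝓝 0] fun _ => u (z + (0 : ℝ) • v) := by
    filter_upwards [hmin, hmax] with s h1 h2
    exact le_antisymm h2 h1
  have : deriv (deriv (fun s : ℝ => u (z + s • v))) 0 = 0 := by
    rw [hconst.deriv.deriv_eq]; simp
  rw [hderiv2] at this
  exact hpos.ne' this

/-- The trace of `A` against a bilinear form that is nonpositive on the diagonal is nonpositive. -/
lemma sum_mul_bilin_nonpos {n : ℕ} {A : Matrix (Fin n) (Fin n) ℝ} (hA : A.PosDef)
    {E : Type*} [NormedAddCommGroup E] [NormedSpace ℝ E] (Q : E →L[ℝ] E →L[ℝ] ℝ)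
    (e : Fin n → E) (hQ : ∀ c : Fin n → ℝ, Q (∑ h, c h • e h) (∑ h, c h • e h) ≤ 0) :
    ∑ h, ∑ k, A h k * Q (e k) (e h) ≤ 0 := by
  obtain ⟨B, rfl⟩ : ∃ B : Matrix (Fin n) (Fin n) ℝ, A = Bᴴ * B := by
    open scoped ComplexOrder MatrixOrder in
    obtain ⟨B, hB⟩ := CStarAlgebra.nonneg_iff_eq_star_mul_self.mp hA.posSemidef.nonneg
    exact ⟨B, hB⟩
  have key : ∑ h, ∑ k, (Bᴴ * B) h k * Q (e k) (e h)
      = ∑ i, Q (∑ h, B i h • e h) (∑ h, B i h • e h) := by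
    simp only [Matrix.mul_apply, Matrix.conjTranspose_apply, star_trivial, map_sum, map_smul,
      FunLike.coe_sum, FunLike.coe_smul, Finset.sum_apply, Pi.smul_apply, smul_eq_mul,
      Finset.sum_mul, Finset.mul_sum]
    calc _ = ∑ h, ∑ i, ∑ k, B i h * B i k * Q (e k) (e h) :=
          Finset.sum_congr rfl fun h _ => Finset.sum_comm
      _ = ∑ i, ∑ h, ∑ k, B i h * B i k * Q (e k) (e h) := Finset.sum_comm
      _ = _ := Finset.sum_congr rfl fun i _ => Finset.sum_congr rfl fun h _ =>
          Finset.sum_congr rfl fun k _ => by ring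
  rw [key]
  exact Finset.sum_nonpos fun i _ => hQ _

lemma time_deriv_nonpos_of_isLocalMax {n : ℕ} {A : Matrix (Fin n) (Fin n) ℝ} (hA : A.PosDef)
    {u : EuclideanSpace ℝ (Fin n) × ℝ → ℝ} {z : EuclideanSpace ℝ (Fin n) × ℝ}
    (hu : ContDiffAt ℝ 2 u z) (heq : HstarE n A u z = 0) {f : ℝ → ℝ} {f' : ℝ}
    (hf : HasDerivAt f f' z.2) (hmax : IsLocalMax (fun w => u w + f w.2) z) : f' ≤ 0 := by
  have hd : DifferentiableAt ℝ u z := hu.differentiableAt (by simp)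
  have hd2 : DifferentiableAt ℝ (fderiv ℝ u) z :=
    (hu.fderiv_right (m := 1) (by norm_num)).differentiableAt (by simp)
  have hline : ∀ v : EuclideanSpace ℝ (Fin n) × ℝ,
      IsLocalMax (fun s : ℝ => u (z + s • v) + f (z + s • v).2) 0 := fun v => by
    have hc : ContinuousAt (fun s : ℝ => z + s • v) 0 := by fun_prop
    have hmax' : IsLocalMax (fun w => u w + f w.2) (z + (0 : ℝ) • v) := by simpa using hmax
    exact hmax'.comp_continuous (g := fun s : ℝ => z + s • v) hc
  have htime : fderiv ℝ u z (0, 1) + f' = 0 := by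
    refine (hline (0, 1)).hasDerivAt_eq_zero ?_
    have h1 : HasDerivAt (fun s : ℝ => z + s • ((0, 1) : EuclideanSpace ℝ (Fin n) × ℝ))
        (0, 1) 0 := by
      simpa using ((hasDerivAt_id (0 : ℝ)).smul_const
        ((0, 1) : EuclideanSpace ℝ (Fin n) × ℝ)).const_add z
    have h2 : HasFDerivAt u (fderiv ℝ u z)
        (z + (0 : ℝ) • ((0, 1) : EuclideanSpace ℝ (Fin n) × ℝ)) := by simpa using hd.hasFDerivAt
    have h3 : HasDerivAt (fun s : ℝ => z.2 + s) 1 0 := (hasDerivAt_id (0 : ℝ)).const_add _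
    have h4 : HasDerivAt f f' (z.2 + 0) := by simpa using hf
    refine (h2.comp_hasDerivAt (0 : ℝ) h1).add ?_
    simpa [Function.comp_def] using h4.comp (0 : ℝ) h3
  have hspace : ∑ h, ∑ k, A h k * fderiv ℝ (fderiv ℝ u) z (EuclideanSpace.single k 1, 0)
      (EuclideanSpace.single h 1, 0) ≤ 0 := by
    refine sum_mul_bilin_nonpos hA (fderiv ℝ (fderiv ℝ u) z)
      (fun h => (EuclideanSpace.single h 1, 0)) fun c => second_deriv_nonpos hu _ ?_
    set v : EuclideanSpace ℝ (Fin n) × ℝ := ∑ h, c h • (EuclideanSpace.single h 1, 0) with hv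
    have hv2 : v.2 = 0 := by simp [hv, Prod.snd_sum]
    have := hline v
    filter_upwards [this] with s hs
    simpa [hv2] using hs
  have hsec : ∀ v v' : EuclideanSpace ℝ (Fin n) × ℝ,
      fderiv ℝ (fun w => fderiv ℝ u w v) z v' = fderiv ℝ (fderiv ℝ u) z v' v := fun v v' => by
    rw [fderiv_clm_apply hd2 (differentiableAt_const v)]
    simp
  simp only [HstarE, hsec] at heq
  linarith

/-- Above the cylinder `u ≤ 0`; no boundary information at `t = T*` is needed. -/
lemma nonpos_above {n : ℕ} {A : Matrix (Fin n) (Fin n) ℝ} (hA : A.PosDef) {T : ℝ}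
    {u : EuclideanSpace ℝ (Fin n) × ℝ → ℝ}
    (hcont : ContinuousOn u {z | T ≤ z.2})
    (hsmooth : ∀ z : EuclideanSpace ℝ (Fin n) × ℝ, T < z.2 → ContDiffAt ℝ 2 u z)
    (heq : ∀ z : EuclideanSpace ℝ (Fin n) × ℝ, T < z.2 → HstarE n A u z = 0)
    (hinf : Tendsto u (cocompact (EuclideanSpace ℝ (Fin n) × ℝ)) (𝓝 0))
    (z₀ : EuclideanSpace ℝ (Fin n) × ℝ) (hz₀ : T < z₀.2) : u z₀ ≤ 0 := by
  by_contra! hpos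
  have ht₀ : 0 < z₀.2 - T := sub_pos.mpr hz₀
  -- With this `ε` the penalized function equals `u z₀ / 2` at `z₀`.
  set ε : ℝ := u z₀ * (z₀.2 - T) / 2 with hε
  have hεpos : 0 < ε := by positivity
  set f : ℝ → ℝ := fun t => -(ε / (t - T)) with hf
  have hfz₀ : f z₀.2 = -(u z₀ / 2) := by simp only [hf, hε]; field_simp
  have hfneg : ∀ t, T < t → f t < 0 := fun t ht =>
    neg_neg_of_pos (div_pos hεpos (sub_pos.mpr ht))
  obtain ⟨L, hL, hLsub⟩ := mem_cocompact.mp (hinf.eventually (gt_mem_nhds (half_pos hpos)))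
  have hout : ∀ z ∉ L, u z < u z₀ / 2 := fun z hz => hLsub hz
  have hclosed : ∀ a : ℝ, IsClosed {z : EuclideanSpace ℝ (Fin n) × ℝ | a ≤ z.2} := fun a =>
    isClosed_le continuous_const continuous_snd
  obtain ⟨M, hM⟩ := (hL.inter_right (hclosed T)).bddAbove_image
    (hcont.mono Set.inter_subset_right)
  have hM' : ∀ z ∈ L, T ≤ z.2 → u z ≤ M := fun z hz ht => hM ⟨z, ⟨hz, ht⟩, rfl⟩
  have hM1 : 0 < |M| + 1 := by positivity
  set δ : ℝ := min (z₀.2 - T) (ε / (|M| + 1)) with hδ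
  have hδpos : 0 < δ := lt_min ht₀ (by positivity)
  have hnear : ∀ z ∈ L, T < z.2 → z.2 < T + δ → u z + f z.2 < 0 := fun z hz h1 h2 => by
    have h3 : 0 < z.2 - T := sub_pos.mpr h1
    have h4 : z.2 - T < ε / (|M| + 1) := by
      have := min_le_right (z₀.2 - T) (ε / (|M| + 1)); linarith
    have h5 : |M| + 1 < ε / (z.2 - T) := by
      rw [lt_div_iff₀ hM1] at h4
      rw [lt_div_iff₀ h3]; linarith
    have := hM' z hz h1.le
    have := le_abs_self M
    simp only [hf]; linarith
  have hz₀S : z₀ ∈ L ∩ {z | T + δ ≤ z.2} := by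
    refine ⟨by_contra fun h => ?_, ?_⟩
    · have := hout z₀ h; linarith
    · have := min_le_left (z₀.2 - T) (ε / (|M| + 1))
      change T + δ ≤ z₀.2; linarith
  have hcS : ContinuousOn (fun z : EuclideanSpace ℝ (Fin n) × ℝ => u z + f z.2)
      (L ∩ {z | T + δ ≤ z.2}) := by
    refine (hcont.mono fun z hz => ?_).add ?_
    · have : T + δ ≤ z.2 := hz.2
      change T ≤ z.2; linarith
    · refine (continuousOn_const.div (by fun_prop) fun z hz => ?_).neg
      have : T + δ ≤ z.2 := hz.2
      exact (by linarith : 0 < z.2 - T).ne'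
  obtain ⟨z₁, hz₁, hmax⟩ := (hL.inter_right (hclosed (T + δ))).exists_isMaxOn ⟨z₀, hz₀S⟩ hcS
  have hge : u z₀ / 2 ≤ u z₁ + f z₁.2 := by
    have : u z₀ + f z₀.2 ≤ u z₁ + f z₁.2 := hmax hz₀S
    linarith
  have ht₁ : T < z₁.2 := by
    have : T + δ ≤ z₁.2 := hz₁.2
    linarith
  have hloc : IsLocalMax (fun z => u z + f z.2) z₁ := by
    filter_upwards [(isOpen_lt continuous_const continuous_snd).mem_nhds ht₁] with z hz
    have hz : T < z.2 := hz
    by_cases hzL : z ∈ L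
    · by_cases hzδ : T + δ ≤ z.2
      · exact hmax ⟨hzL, hzδ⟩
      · have := hnear z hzL hz (not_le.mp hzδ); linarith
    · have := hout z hzL
      have := hfneg z.2 hz
      linarith
  have hder : HasDerivAt f (ε / (z₁.2 - T) ^ 2) z₁.2 := by
    have h1 : HasDerivAt (fun t : ℝ => t - T) 1 z₁.2 := (hasDerivAt_id _).sub_const T
    have h2 := ((hasDerivAt_const z₁.2 ε).div h1 (sub_pos.mpr ht₁).ne').neg
    exact h2.congr_deriv (by ring)
  have := time_deriv_nonpos_of_isLocalMax hA (hsmooth z₁ ht₁) (heq z₁ ht₁) hder hloc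
  have : 0 < ε / (z₁.2 - T) ^ 2 := div_pos hεpos (pow_pos (sub_pos.mpr ht₁) 2)
  linarith

/-- One-sided form of the theorem, to be applied to both `u` and `-u`. -/
lemma nonpos_everywhere {n : ℕ} {A : Matrix (Fin n) (Fin n) ℝ} (hA : A.PosDef)
    {r T : ℝ} {u : EuclideanSpace ℝ (Fin n) × ℝ → ℝ}
    (hcont : ContinuousOn u
      (Metric.ball (0 : EuclideanSpace ℝ (Fin n)) r ×ˢ Set.Ioo (-T) T)ᶜ)
    (hsmooth : ContDiffOn ℝ (⊤ : ℕ∞) u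
      (Metric.closedBall (0 : EuclideanSpace ℝ (Fin n)) r ×ˢ Set.Icc (-T) T)ᶜ)
    (heq : ∀ z ∉ Metric.closedBall (0 : EuclideanSpace ℝ (Fin n)) r ×ˢ Set.Icc (-T) T,
      HstarE n A u z = 0)
    (hbd : ∀ z ∈ (Metric.closedBall (0 : EuclideanSpace ℝ (Fin n)) r ×ˢ ({-T} : Set ℝ)) ∪
        (Metric.sphere (0 : EuclideanSpace ℝ (Fin n)) r ×ˢ Set.Icc (-T) T), u z = 0)
    (hinf : Tendsto u (cocompact (EuclideanSpace ℝ (Fin n) × ℝ)) (𝓝 0))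
    (z₀ : EuclideanSpace ℝ (Fin n) × ℝ)
    (hz₀ : z₀ ∉ Metric.ball (0 : EuclideanSpace ℝ (Fin n)) r ×ˢ Set.Ioo (-T) T) : u z₀ ≤ 0 := by
  have hopen : IsOpen (Metric.closedBall (0 : EuclideanSpace ℝ (Fin n)) r ×ˢ Set.Icc (-T) T)ᶜ :=
    (Metric.isClosed_closedBall.prod isClosed_Icc).isOpen_compl
  have hsm : ∀ z ∉ Metric.closedBall (0 : EuclideanSpace ℝ (Fin n)) r ×ˢ Set.Icc (-T) T,
      ContDiffAt ℝ 2 u z := fun z hz =>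
    (hsmooth.contDiffAt (hopen.mem_nhds hz)).of_le (by
      exact WithTop.coe_le_coe.mpr (le_top : (2 : ℕ∞) ≤ ⊤))
  have hcT : ContinuousOn u {z | T ≤ z.2} := hcont.mono fun z hz h => by
    have h1 : T ≤ z.2 := hz
    exact absurd h.2.2 (not_lt.mpr h1)
  have hK : ∀ z : EuclideanSpace ℝ (Fin n) × ℝ, T < z.2 →
      z ∉ Metric.closedBall (0 : EuclideanSpace ℝ (Fin n)) r ×ˢ Set.Icc (-T) T :=
    fun z hz h => absurd h.2.2 (not_le.mpr hz)
  have habove : ∀ z : EuclideanSpace ℝ (Fin n) × ℝ, T < z.2 → u z ≤ 0 :=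
    nonpos_above hA hcT (fun z hz => hsm z (hK z hz)) (fun z hz => heq z (hK z hz)) hinf
  have habove' : ∀ z : EuclideanSpace ℝ (Fin n) × ℝ, T ≤ z.2 → u z ≤ 0 := by
    rintro ⟨x, t⟩ (ht : T ≤ t)
    have hlim : Tendsto (fun s : ℝ => (x, s)) (𝓝[>] t) (𝓝[{z | T ≤ z.2}] (x, t)) := by
      refine tendsto_nhdsWithin_iff.mpr ⟨?_, ?_⟩
      · exact ((by fun_prop : Continuous fun s : ℝ => (x, s)).tendsto t).mono_left
          nhdsWithin_le_nhds
      · filter_upwards [self_mem_nhdsWithin] with s hs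
        exact ht.trans (le_of_lt hs)
    refine le_of_tendsto ((hcT (x, t) ht).tendsto.comp hlim) ?_
    filter_upwards [self_mem_nhdsWithin] with s hs
    exact habove (x, s) (ht.trans_lt hs)
  by_contra! hpos
  have ht₀ : z₀.2 < T := by
    by_contra! h
    exact absurd (habove' z₀ h) (not_le.mpr hpos)
  have ht₀' : 0 < T - z₀.2 := sub_pos.mpr ht₀
  set ε : ℝ := u z₀ / (2 * (T - z₀.2)) with hε
  have hεpos : 0 < ε := by positivity
  set f : ℝ → ℝ := fun t => ε * (t - T) with hf
  have hfz₀ : f z₀.2 = -(u z₀ / 2) := by simp only [hf, hε]; field_simp; ring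
  have hfneg : ∀ t, t ≤ T → f t ≤ 0 := fun t ht =>
    mul_nonpos_of_nonneg_of_nonpos hεpos.le (by linarith)
  obtain ⟨L, hL, hLsub⟩ := mem_cocompact.mp (hinf.eventually (gt_mem_nhds (half_pos hpos)))
  have hout : ∀ z ∉ L, u z < u z₀ / 2 := fun z hz => hLsub hz
  set D := (Metric.ball (0 : EuclideanSpace ℝ (Fin n)) r ×ˢ Set.Ioo (-T) T)ᶜ with hD
  have hSclosed : IsClosed (D ∩ {z | z.2 ≤ T}) :=
    (Metric.isOpen_ball.prod isOpen_Ioo).isClosed_compl.inter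
      (isClosed_le continuous_snd continuous_const)
  have hz₀S : z₀ ∈ L ∩ (D ∩ {z | z.2 ≤ T}) := by
    refine ⟨by_contra fun h => ?_, hz₀, ht₀.le⟩
    have := hout z₀ h; linarith
  have hcS : ContinuousOn (fun z : EuclideanSpace ℝ (Fin n) × ℝ => u z + f z.2)
      (L ∩ (D ∩ {z | z.2 ≤ T})) :=
    (hcont.mono fun z hz => hz.2.1).add (by fun_prop)
  obtain ⟨z₁, hz₁, hmax⟩ := (hL.inter_right hSclosed).exists_isMaxOn ⟨z₀, hz₀S⟩ hcS
  have hge : u z₀ / 2 ≤ u z₁ + f z₁.2 := by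
    have : u z₀ + f z₀.2 ≤ u z₁ + f z₁.2 := hmax hz₀S
    linarith
  have hu₁ : 0 < u z₁ := by
    have := hfneg z₁.2 hz₁.2.2; linarith
  have ht₁ : z₁.2 < T := by
    by_contra! h
    exact absurd (habove' z₁ h) (not_le.mpr hu₁)
  have hz₁K : z₁ ∉ Metric.closedBall (0 : EuclideanSpace ℝ (Fin n)) r ×ˢ Set.Icc (-T) T := by
    rintro ⟨hx, ht⟩
    refine hu₁.ne' (hbd z₁ ?_)
    by_cases hx' : z₁.1 ∈ Metric.sphere (0 : EuclideanSpace ℝ (Fin n)) r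
    · exact Or.inr ⟨hx', ht⟩
    · refine Or.inl ⟨hx, ?_⟩
      have hb : z₁.1 ∈ Metric.ball (0 : EuclideanSpace ℝ (Fin n)) r :=
        lt_of_le_of_ne hx hx'
      by_contra hne
      exact hz₁.2.1 ⟨hb, lt_of_le_of_ne ht.1 (Ne.symm hne), ht₁⟩
  have hloc : IsLocalMax (fun z => u z + f z.2) z₁ := by
    filter_upwards [(isOpen_lt continuous_snd continuous_const).mem_nhds ht₁,
      hopen.mem_nhds hz₁K] with z hz hzK
    have hz : z.2 < T := hz
    by_cases hzL : z ∈ L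
    · refine hmax ⟨hzL, fun h => hzK ?_, hz.le⟩
      exact ⟨Metric.ball_subset_closedBall h.1, Set.Ioo_subset_Icc_self h.2⟩
    · have := hout z hzL
      have := hfneg z.2 hz.le
      linarith
  have hder : HasDerivAt f ε z₁.2 := by
    simpa using ((hasDerivAt_id z₁.2).sub_const T).const_mul ε
  have := time_deriv_nonpos_of_isLocalMax hA (hsm z₁ hz₁K) (heq z₁ hz₁K) hder hloc
  linarith

lemma HstarE_neg {n : ℕ} (A : Matrix (Fin n) (Fin n) ℝ)
    (u : EuclideanSpace ℝ (Fin n) × ℝ → ℝ) (z : EuclideanSpace ℝ (Fin n) × ℝ) :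
    HstarE n A (fun w => -u w) z = -HstarE n A u z := by
  simp only [HstarE, fderiv_fun_neg, FunLike.coe_neg, Pi.neg_apply, mul_neg,
    Finset.sum_neg_distrib]
  ring

theorem stmt_16 (n : ℕ) (hn : 3 ≤ n) (A : Matrix (Fin n) (Fin n) ℝ) (hA : A.PosDef)
    (r Tstar : ℝ) (hr : 0 < r) (hT : 0 < Tstar)
    (u : EuclideanSpace ℝ (Fin n) × ℝ → ℝ)
    (hcont : ContinuousOn u
      (Metric.ball (0 : EuclideanSpace ℝ (Fin n)) r ×ˢ Set.Ioo (-Tstar) Tstar)ᶜ)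
    (hsmooth : ContDiffOn ℝ (⊤ : ℕ∞) u
      (Metric.closedBall (0 : EuclideanSpace ℝ (Fin n)) r ×ˢ Set.Icc (-Tstar) Tstar)ᶜ)
    (heq : ∀ z ∉ Metric.closedBall (0 : EuclideanSpace ℝ (Fin n)) r ×ˢ Set.Icc (-Tstar) Tstar,
      HstarE n A u z = 0)
    (hbd : ∀ z ∈ (Metric.closedBall (0 : EuclideanSpace ℝ (Fin n)) r ×ˢ ({-Tstar} : Set ℝ)) ∪
        (Metric.sphere (0 : EuclideanSpace ℝ (Fin n)) r ×ˢ Set.Icc (-Tstar) Tstar), u z = 0)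
    (hinf : Filter.Tendsto u (Filter.cocompact (EuclideanSpace ℝ (Fin n) × ℝ)) (nhds 0)) :
    ∀ z ∉ Metric.ball (0 : EuclideanSpace ℝ (Fin n)) r ×ˢ Set.Ioo (-Tstar) Tstar, u z = 0 := by
  intro z hz
  refine le_antisymm (nonpos_everywhere hA hcont hsmooth heq hbd hinf z hz) ?_
  have := nonpos_everywhere (u := fun w => -u w) hA hcont.neg hsmooth.neg
    (fun w hw => by rw [HstarE_neg, heq w hw, neg_zero])
    (fun w hw => by rw [hbd w hw, neg_zero]) (by simpa using hinf.neg) z hz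
  linarith
end
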